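/- arXiv:1907.02219 — 4 statements merged into one kernel-verified Lean document; each statement's English description precedes it below -/
import Mathlib

section
/- For any S_G ⊆ {1,…,N_G} and S_B ⊆ {1,…,E} with |S_G| + |S_B| = N_G − 1 and S_G ⊥ S_B, there exist f** ∈ Ω_f, ξ** ∈ Ω_ξ satisfying both that the closure of the interior of Ω_sl(ξ**) equals the closure of Ω_sl(ξ**) and that ~Ω_sl(ξ**, f**) is dense in Ω_sl(ξ**), and a nonempty open ball W ⊆ ~Ω_sl(ξ**, f**), such that for every s^l ∈ W the binding inequality constraints at the unique optimal solution of the DC-OPF with data (f**, ξ**, s^l) consist of exactly one generation bound for each generator i ∈ S_G, exactly one flow bound for each branch e ∈ S_B, and nothing else. -/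
open Matrix

noncomputable section

/-- Parameter tuple ξ = (s̄, s̲, p̄, p̲). -/
abbrev XiT (NG E : ℕ) : Type := (Fin NG → ℝ) × (Fin NG → ℝ) × (Fin E → ℝ) × (Fin E → ℝ)

/-- Each column of `C` has exactly one `+1`, one `-1`, and zeros elsewhere. -/
def IsIncidence {NG NL E : ℕ} (C : Matrix (Fin (NG + NL)) (Fin E) ℝ) : Prop :=
  ∀ e : Fin E, ∃ u v : Fin (NG + NL), u ≠ v ∧ C u e = 1 ∧ C v e = -1 ∧
    ∀ w : Fin (NG + NL), w ≠ u → w ≠ v → C w e = 0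

/-- Connectedness: the kernel of `Cᵀ` consists exactly of the constant vectors. -/
def ConnectedIncidence {NG NL E : ℕ} (C : Matrix (Fin (NG + NL)) (Fin E) ℝ) : Prop :=
  ∀ x : Fin (NG + NL) → ℝ, Cᵀ *ᵥ x = 0 ↔ ∃ c : ℝ, x = fun _ => c

/-- `B` is diagonal with strictly positive diagonal entries. -/
def PosDiag {E : ℕ} (B : Matrix (Fin E) (Fin E) ℝ) : Prop :=
  (∀ e, 0 < B e e) ∧ ∀ e e' : Fin E, e ≠ e' → B e e' = 0

/-- Feasibility of `(s^g, θ)` for the DC-OPF with limits `ξ` and loads `sl`. -/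
def Feasible {NG NL E : ℕ} (C : Matrix (Fin (NG + NL)) (Fin E) ℝ)
    (B : Matrix (Fin E) (Fin E) ℝ) (ξ : XiT NG E) (sl : Fin NL → ℝ)
    (sg : Fin NG → ℝ) (θ : Fin (NG + NL) → ℝ) : Prop :=
  (∀ h : 0 < NG + NL, θ ⟨0, h⟩ = 0) ∧
  (C * B * Cᵀ) *ᵥ θ = Fin.append sg (fun j => -(sl j)) ∧
  (∀ i, ξ.2.1 i ≤ sg i ∧ sg i ≤ ξ.1 i) ∧
  (∀ e, ξ.2.2.2 e ≤ ((B * Cᵀ) *ᵥ θ) e ∧ ((B * Cᵀ) *ᵥ θ) e ≤ ξ.2.2.1 e)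

/-- The set Ω_ξ of admissible system limits. -/
def OmegaXi {NG NL E : ℕ} (C : Matrix (Fin (NG + NL)) (Fin E) ℝ)
    (B : Matrix (Fin E) (Fin E) ℝ) : Set (XiT NG E) :=
  { ξ | (∀ i, 0 ≤ ξ.2.1 i) ∧ (∀ i, ξ.2.1 i < ξ.1 i) ∧ (∀ e, ξ.2.2.2 e < ξ.2.2.1 e) ∧
    ∃ sl : Fin NL → ℝ, (∀ j, 0 < sl j) ∧ ∃ sg θ, Feasible C B ξ sl sg θ }

/-- The set Ω_sl(ξ) of strictly positive feasible load profiles. -/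
def OmegaSl {NG NL E : ℕ} (C : Matrix (Fin (NG + NL)) (Fin E) ℝ)
    (B : Matrix (Fin E) (Fin E) ℝ) (ξ : XiT NG E) : Set (Fin NL → ℝ) :=
  { sl | (∀ j, 0 < sl j) ∧ ∃ sg θ, Feasible C B ξ sl sg θ }

/-- `(sg, θ)` is an optimal solution of the DC-OPF. -/
def IsOptimal {NG NL E : ℕ} (C : Matrix (Fin (NG + NL)) (Fin E) ℝ)
    (B : Matrix (Fin E) (Fin E) ℝ) (f : Fin NG → ℝ) (ξ : XiT NG E)
    (sl : Fin NL → ℝ) (sg : Fin NG → ℝ) (θ : Fin (NG + NL) → ℝ) : Prop :=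
  Feasible C B ξ sl sg θ ∧
  ∀ sg' θ', Feasible C B ξ sl sg' θ' → f ⬝ᵥ sg ≤ f ⬝ᵥ sg'

/-- The matrix M: first N rows are C B Cᵀ, last row is e₁ᵀ. -/
def Mmat {NG NL E : ℕ} (C : Matrix (Fin (NG + NL)) (Fin E) ℝ)
    (B : Matrix (Fin E) (Fin E) ℝ) : Matrix (Fin (NG + NL + 1)) (Fin (NG + NL)) ℝ :=
  Matrix.of fun i j => if h : (i : ℕ) < NG + NL then (C * B * Cᵀ) ⟨(i : ℕ), h⟩ j
    else if (j : ℕ) = 0 then 1 else 0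

/-- KKT point for the DC-OPF. -/
def IsKKT {NG NL E : ℕ} (C : Matrix (Fin (NG + NL)) (Fin E) ℝ)
    (B : Matrix (Fin E) (Fin E) ℝ) (f : Fin NG → ℝ) (ξ : XiT NG E)
    (sl : Fin NL → ℝ) (sg : Fin NG → ℝ) (θ : Fin (NG + NL) → ℝ)
    (τ : Fin (NG + NL + 1) → ℝ) (μp μm : Fin E → ℝ) (lp lm : Fin NG → ℝ) : Prop :=
  Feasible C B ξ sl sg θ ∧
  (Mmat C B)ᵀ *ᵥ τ + (C * B) *ᵥ (μp - μm) = 0 ∧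
  (∀ i : Fin NG, -f i = -τ (Fin.castLE (by omega) i) + lp i - lm i) ∧
  (∀ e, 0 ≤ μp e) ∧ (∀ e, 0 ≤ μm e) ∧ (∀ i, 0 ≤ lp i) ∧ (∀ i, 0 ≤ lm i) ∧
  μp ⬝ᵥ (((B * Cᵀ) *ᵥ θ) - ξ.2.2.1) = 0 ∧
  μm ⬝ᵥ (ξ.2.2.2 - ((B * Cᵀ) *ᵥ θ)) = 0 ∧
  lp ⬝ᵥ (sg - ξ.1) = 0 ∧
  lm ⬝ᵥ (ξ.2.1 - sg) = 0

/-- ℓ₀ "norm": number of nonzero entries. -/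
def nnz {n : ℕ} (v : Fin n → ℝ) : ℕ := Set.ncard { i | v i ≠ 0 }

/-- The set Ω_f of well-behaved cost vectors. -/
def OmegaF {NG NL E : ℕ} (C : Matrix (Fin (NG + NL)) (Fin E) ℝ)
    (B : Matrix (Fin E) (Fin E) ℝ) : Set (Fin NG → ℝ) :=
  { f | (∀ i, 0 ≤ f i) ∧
    ∀ ξ ∈ OmegaXi C B, ∀ sl ∈ OmegaSl C B ξ,
      (∃! p : (Fin NG → ℝ) × (Fin (NG + NL) → ℝ), IsOptimal C B f ξ sl p.1 p.2) ∧
      ∀ sg θ τ μp μm lp lm, IsKKT C B f ξ sl sg θ τ μp μm lp lm →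
        NG - 1 ≤ nnz μp + nnz μm + nnz lp + nnz lm }

/-- Number of binding inequality constraints at `(sg, θ)` (among the 2N_G + 2E). -/
def bindingCount {NG NL E : ℕ} (C : Matrix (Fin (NG + NL)) (Fin E) ℝ)
    (B : Matrix (Fin E) (Fin E) ℝ) (ξ : XiT NG E) (sg : Fin NG → ℝ)
    (θ : Fin (NG + NL) → ℝ) : ℕ :=
  Set.ncard { i : Fin NG | sg i = ξ.1 i } + Set.ncard { i : Fin NG | sg i = ξ.2.1 i } +
  Set.ncard { e : Fin E | ((B * Cᵀ) *ᵥ θ) e = ξ.2.2.1 e } +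
  Set.ncard { e : Fin E | ((B * Cᵀ) *ᵥ θ) e = ξ.2.2.2 e }

/-- ~Ω_sl(ξ, f): loads with exactly N_G − 1 binding constraints at the optimum. -/
def TOmegaSl {NG NL E : ℕ} (C : Matrix (Fin (NG + NL)) (Fin E) ℝ)
    (B : Matrix (Fin E) (Fin E) ℝ) (f : Fin NG → ℝ) (ξ : XiT NG E) :
    Set (Fin NL → ℝ) :=
  { sl | sl ∈ OmegaSl C B ξ ∧
    ∀ sg θ, IsOptimal C B f ξ sl sg θ → bindingCount C B ξ sg θ = NG - 1 }

/-- Indices of binding inequality constraints: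
`inl i` = upper generation, `inr (inl i)` = lower generation,
`inr (inr (inl e))` = upper flow, `inr (inr (inr e))` = lower flow. -/
def BindingIdx {NG NL E : ℕ} (C : Matrix (Fin (NG + NL)) (Fin E) ℝ)
    (B : Matrix (Fin E) (Fin E) ℝ) (ξ : XiT NG E) (sg : Fin NG → ℝ)
    (θ : Fin (NG + NL) → ℝ) : Set (Fin NG ⊕ Fin NG ⊕ Fin E ⊕ Fin E) :=
  { c | match c with
    | Sum.inl i => sg i = ξ.1 i
    | Sum.inr (Sum.inl i) => sg i = ξ.2.1 i
    | Sum.inr (Sum.inr (Sum.inl e)) => ((B * Cᵀ) *ᵥ θ) e = ξ.2.2.1 e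
    | Sum.inr (Sum.inr (Sum.inr e)) => ((B * Cᵀ) *ᵥ θ) e = ξ.2.2.2 e }

/-- Gradients of the N + 1 equality constraints, as vectors in ℝ^{N_G} × ℝ^{N}. -/
def eqGrad {NG NL E : ℕ} (C : Matrix (Fin (NG + NL)) (Fin E) ℝ)
    (B : Matrix (Fin E) (Fin E) ℝ) :
    (Unit ⊕ Fin (NG + NL)) → (Fin NG → ℝ) × (Fin (NG + NL) → ℝ)
  | Sum.inl _ => (0, fun j => if (j : ℕ) = 0 then 1 else 0)
  | Sum.inr i => ((fun k : Fin NG => if (k : ℕ) = (i : ℕ) then -1 else 0),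
      fun j => (C * B * Cᵀ) i j)

/-- Gradients of the inequality constraints. -/
def ineqGrad {NG NL E : ℕ} (C : Matrix (Fin (NG + NL)) (Fin E) ℝ)
    (B : Matrix (Fin E) (Fin E) ℝ) :
    (Fin NG ⊕ Fin NG ⊕ Fin E ⊕ Fin E) → (Fin NG → ℝ) × (Fin (NG + NL) → ℝ)
  | Sum.inl i => (Pi.single i 1, 0)
  | Sum.inr (Sum.inl i) => (-Pi.single i 1, 0)
  | Sum.inr (Sum.inr (Sum.inl e)) => (0, fun j => (B * Cᵀ) e j)
  | Sum.inr (Sum.inr (Sum.inr e)) => (0, fun j => -(B * Cᵀ) e j)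

/-- The family of gradients of all equality constraints together with the binding
inequality constraints at `(sg, θ)`. -/
def fullGrad {NG NL E : ℕ} (C : Matrix (Fin (NG + NL)) (Fin E) ℝ)
    (B : Matrix (Fin E) (Fin E) ℝ) (ξ : XiT NG E) (sg : Fin NG → ℝ)
    (θ : Fin (NG + NL) → ℝ) :
    ((Unit ⊕ Fin (NG + NL)) ⊕ ↥(BindingIdx C B ξ sg θ)) →
      (Fin NG → ℝ) × (Fin (NG + NL) → ℝ) :=
  fun i => match i with
    | Sum.inl j => eqGrad C B j
    | Sum.inr c => ineqGrad C B c.1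

/-- S_G ⊥ S_B : the equality-constraint gradients together with the gradients
`(e_i, 0)`, `i ∈ S_G`, and `(0, row e of B Cᵀ)`, `e ∈ S_B`, are linearly independent. -/
def Perp {NG NL E : ℕ} (C : Matrix (Fin (NG + NL)) (Fin E) ℝ)
    (B : Matrix (Fin E) (Fin E) ℝ) (SG : Finset (Fin NG)) (SB : Finset (Fin E)) : Prop :=
  LinearIndependent ℝ (fun i : (Unit ⊕ Fin (NG + NL)) ⊕ (↥SG ⊕ ↥SB) =>
    match i with
    | Sum.inl j => eqGrad C B j
    | Sum.inr (Sum.inl g) => ((Pi.single (g : Fin NG) 1 : Fin NG → ℝ), (0 : Fin (NG + NL) → ℝ))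
    | Sum.inr (Sum.inr e) => ((0 : Fin NG → ℝ), fun j => (B * Cᵀ) (e : Fin E) j))

/-- The OPF operator: the generation part of the (unique) optimal solution. -/
def OPFmap {NG NL E : ℕ} (C : Matrix (Fin (NG + NL)) (Fin E) ℝ)
    (B : Matrix (Fin E) (Fin E) ℝ) (f : Fin NG → ℝ) (ξ : XiT NG E)
    (sl : Fin NL → ℝ) : Fin NG → ℝ := by
  classical
  exact if h : ∃ p : (Fin NG → ℝ) × (Fin (NG + NL) → ℝ), IsOptimal C B f ξ sl p.1 p.2
    then h.choose.1 else 0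

/-- The matrix R(S_G, S_B)ᵀ: rows N_G+1,…,N of C B Cᵀ; the rows of C B Cᵀ indexed
by S_G; the rows of B Cᵀ indexed by S_B; and e₁ᵀ. -/
def Rmat {NG NL E : ℕ} (C : Matrix (Fin (NG + NL)) (Fin E) ℝ)
    (B : Matrix (Fin E) (Fin E) ℝ) (SG : Finset (Fin NG)) (SB : Finset (Fin E)) :
    Matrix ((Fin NL ⊕ (↥SG ⊕ ↥SB)) ⊕ Unit) (Fin (NG + NL)) ℝ :=
  Matrix.of fun i j => match i with
    | Sum.inl (Sum.inl k) => (C * B * Cᵀ) (Fin.natAdd NG k) j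
    | Sum.inl (Sum.inr (Sum.inl g)) => (C * B * Cᵀ) (Fin.castAdd NL (g : Fin NG)) j
    | Sum.inl (Sum.inr (Sum.inr e)) => (B * Cᵀ) (e : Fin E) j
    | Sum.inr _ => if (j : ℕ) = 0 then 1 else 0

/-- The matrix Π applied to a load vector: embeds ℝ^{N_L} in the row-index space. -/
def padSl {NG NL E : ℕ} (SG : Finset (Fin NG)) (SB : Finset (Fin E))
    (v : Fin NL → ℝ) : (Fin NL ⊕ (↥SG ⊕ ↥SB)) ⊕ Unit → ℝ
  | Sum.inl (Sum.inl k) => v k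
  | _ => 0

/-- J(S_G, S_B) as a map: v ↦ −G (R(S_G,S_B)ᵀ)⁻¹ Π v, where G consists of the
first N_G rows of C B Cᵀ. -/
def JFun {NG NL E : ℕ} (C : Matrix (Fin (NG + NL)) (Fin E) ℝ)
    (B : Matrix (Fin E) (Fin E) ℝ) (SG : Finset (Fin NG)) (SB : Finset (Fin E))
    (v : Fin NL → ℝ) : Fin NG → ℝ :=
  fun i =>
    -(((C * B * Cᵀ) *ᵥ (Function.invFun (Rmat C B SG SB).mulVec (padSl SG SB v)))
      (Fin.castAdd NL i))

/-- J(S_G, S_B) as an N_G × N_L matrix. -/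
def Jmatrix {NG NL E : ℕ} (C : Matrix (Fin (NG + NL)) (Fin E) ℝ)
    (B : Matrix (Fin E) (Fin E) ℝ) (SG : Finset (Fin NG)) (SB : Finset (Fin E)) :
    Matrix (Fin NG) (Fin NL) ℝ :=
  Matrix.of fun i j => JFun C B SG SB (Pi.single j 1) i

namespace DCOPF

abbrev Idx (NG E : ℕ) : Type := Fin NG ⊕ Fin NG ⊕ Fin E ⊕ Fin E

section

variable {NG NL E : ℕ} (C : Matrix (Fin (NG + NL)) (Fin E) ℝ) (B : Matrix (Fin E) (Fin E) ℝ)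

/-- nodal injections -/
def inj : (Fin (NG + NL) → ℝ) →ₗ[ℝ] (Fin (NG + NL) → ℝ) := (C * B * Cᵀ).mulVecLin

/-- branch flows -/
def flow : (Fin (NG + NL) → ℝ) →ₗ[ℝ] (Fin E → ℝ) := (B * Cᵀ).mulVecLin

lemma inj_def (v : Fin (NG + NL) → ℝ) : (C * B * Cᵀ) *ᵥ v = inj C B v := rfl
lemma flow_def (v : Fin (NG + NL) → ℝ) : (B * Cᵀ) *ᵥ v = flow C B v := rfl

/-- the functional bounded by an inequality constraint -/
def aF : Idx NG E → ((Fin (NG + NL) → ℝ) →ₗ[ℝ] ℝ)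
  | Sum.inl i => LinearMap.proj (Fin.castAdd NL i) ∘ₗ inj C B
  | Sum.inr (Sum.inl i) => LinearMap.proj (Fin.castAdd NL i) ∘ₗ inj C B
  | Sum.inr (Sum.inr (Sum.inl e)) => LinearMap.proj e ∘ₗ flow C B
  | Sum.inr (Sum.inr (Sum.inr e)) => LinearMap.proj e ∘ₗ flow C B

/-- the bound -/
def bnd (ξ : XiT NG E) : Idx NG E → ℝ
  | Sum.inl i => ξ.1 i
  | Sum.inr (Sum.inl i) => ξ.2.1 i
  | Sum.inr (Sum.inr (Sum.inl e)) => ξ.2.2.1 e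
  | Sum.inr (Sum.inr (Sum.inr e)) => ξ.2.2.2 e

def ofBnd (b : Idx NG E → ℝ) : XiT NG E :=
  (fun i => b (Sum.inl i), fun i => b (Sum.inr (Sum.inl i)),
    fun e => b (Sum.inr (Sum.inr (Sum.inl e))), fun e => b (Sum.inr (Sum.inr (Sum.inr e))))

lemma bnd_ofBnd (b : Idx NG E → ℝ) : bnd (ofBnd b) = b := by
  funext c; rcases c with i | i | e | e <;> rfl

def sgn : Idx NG E → ℝ
  | Sum.inl _ => 1
  | Sum.inr (Sum.inl _) => -1
  | Sum.inr (Sum.inr (Sum.inl _)) => 1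
  | Sum.inr (Sum.inr (Sum.inr _)) => -1

lemma sgn_sq (c : Idx NG E) : sgn c * sgn c = 1 := by
  rcases c with i | i | e | e <;> simp [sgn]

lemma feas_iff (ξ : XiT NG E) (sl : Fin NL → ℝ) (sg : Fin NG → ℝ) (θ : Fin (NG + NL) → ℝ) :
    Feasible C B ξ sl sg θ ↔ (∀ h : 0 < NG + NL, θ ⟨0, h⟩ = 0) ∧
      (∀ j, inj C B θ (Fin.natAdd NG j) = - sl j) ∧
      (∀ i, sg i = inj C B θ (Fin.castAdd NL i)) ∧
      ∀ c, sgn c * aF C B c θ ≤ sgn c * bnd ξ c := by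
  unfold Feasible
  rw [inj_def, flow_def]
  constructor
  · rintro ⟨h0, h1, h2, h3⟩
    have hg : ∀ i, sg i = inj C B θ (Fin.castAdd NL i) := by intro i; rw [h1]; simp
    refine ⟨h0, fun j => by rw [h1]; simp, hg, ?_⟩
    rintro (i | i | e | e) <;> simp only [sgn, aF, bnd, LinearMap.comp_apply, LinearMap.proj_apply, ← hg]
    · linarith [(h2 i).2]
    · linarith [(h2 i).1]
    · linarith [(h3 e).2]
    · linarith [(h3 e).1]
  · rintro ⟨h0, h1, h2, h3⟩
    refine ⟨h0, ?_, ?_, ?_⟩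
    · funext k
      refine Fin.addCases (fun i => ?_) (fun j => ?_) k
      · simp [h2]
      · simp [h1]
    · intro i
      have u := h3 (Sum.inl i)
      have l := h3 (Sum.inr (Sum.inl i))
      simp only [sgn, aF, bnd, LinearMap.comp_apply, LinearMap.proj_apply, ← h2] at u l
      constructor <;> linarith
    · intro e
      have u := h3 (Sum.inr (Sum.inr (Sum.inl e)))
      have l := h3 (Sum.inr (Sum.inr (Sum.inr e)))
      simp only [sgn, aF, bnd, LinearMap.comp_apply, LinearMap.proj_apply] at u l
      constructor <;> linarith

open Classical in
/-- binding constraints -/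
def bind (ξ : XiT NG E) (θ : Fin (NG + NL) → ℝ) : Finset (Idx NG E) :=
  Finset.univ.filter fun c => aF C B c θ = bnd ξ c

lemma mem_bind {ξ : XiT NG E} {θ : Fin (NG + NL) → ℝ} {c} :
    c ∈ bind C B ξ θ ↔ aF C B c θ = bnd ξ c := by simp [bind]

lemma count_eq {ξ : XiT NG E} {sl : Fin NL → ℝ} {sg : Fin NG → ℝ} {θ : Fin (NG + NL) → ℝ}
    (h : Feasible C B ξ sl sg θ) : bindingCount C B ξ sg θ = (bind C B ξ θ).card := by
  classical
  have h2 := ((feas_iff C B ξ sl sg θ).1 h).2.2.1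
  unfold bindingCount bind
  rw [Finset.card_filter, Fintype.sum_sum_type, Fintype.sum_sum_type, Fintype.sum_sum_type]
  simp only [Set.ncard_eq_toFinset_card', Set.toFinset_ofPred, Finset.card_filter, aF, bnd,
    LinearMap.comp_apply, LinearMap.proj_apply, ← h2, flow_def]
  simp only [add_assoc]
  congr!

/-- cost as a function of the angles -/
def Fl (f : Fin NG → ℝ) : (Fin (NG + NL) → ℝ) →ₗ[ℝ] ℝ :=
  ∑ i, f i • (LinearMap.proj (Fin.castAdd NL i) ∘ₗ inj C B)

lemma Fl_apply (f : Fin NG → ℝ) (v : Fin (NG + NL) → ℝ) :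
    Fl C B f v = ∑ i, f i * inj C B v (Fin.castAdd NL i) := by
  simp [Fl, LinearMap.sum_apply]

lemma cost_eq {f : Fin NG → ℝ} {ξ : XiT NG E} {sl : Fin NL → ℝ} {sg : Fin NG → ℝ}
    {θ : Fin (NG + NL) → ℝ} (h : Feasible C B ξ sl sg θ) : f ⬝ᵥ sg = Fl C B f θ := by
  have h2 := ((feas_iff C B ξ sl sg θ).1 h).2.2.1
  rw [Fl_apply]; simp [dotProduct, h2]

/-- directions killed by the constraints in `T` -/
def InK (T : Finset (Idx NG E)) (v : Fin (NG + NL) → ℝ) : Prop :=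
  (∀ h : 0 < NG + NL, v ⟨0, h⟩ = 0) ∧ (∀ j, inj C B v (Fin.natAdd NG j) = 0) ∧
    ∀ c ∈ T, aF C B c v = 0

def GenF (f : Fin NG → ℝ) : Prop := ∀ T : Finset (Idx NG E), (∃ v, v ≠ 0 ∧ InK C B T v) →
  ∃ v, InK C B T v ∧ Fl C B f v ≠ 0

/-- A direction killed by all binding constraints cannot change the cost at an optimum. -/
lemma move {f : Fin NG → ℝ} {ξ : XiT NG E} {sl : Fin NL → ℝ} {sg : Fin NG → ℝ}
    {θ v : Fin (NG + NL) → ℝ} (h : IsOptimal C B f ξ sl sg θ)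
    (hv : InK C B (bind C B ξ θ) v) : Fl C B f v = 0 := by
  obtain ⟨hf, hopt⟩ := h
  have hf' := (feas_iff C B ξ sl sg θ).1 hf
  have ev : ∀ᶠ ε : ℝ in nhds 0, ∀ c, sgn c * aF C B c (θ + ε • v) ≤ sgn c * bnd ξ c := by
    rw [Filter.eventually_all]
    intro c
    by_cases hc : c ∈ bind C B ξ θ
    · refine Filter.Eventually.of_forall fun ε => ?_
      rw [map_add, map_smul, hv.2.2 c hc, (mem_bind C B).1 hc]; simp
    · have hlt : sgn c * aF C B c θ < sgn c * bnd ξ c := by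
        refine lt_of_le_of_ne (hf'.2.2.2 c) fun h => hc ((mem_bind C B).2 ?_)
        have := sgn_sq c
        calc aF C B c θ = sgn c * sgn c * aF C B c θ := by rw [this, one_mul]
          _ = sgn c * (sgn c * bnd ξ c) := by rw [mul_assoc, h]
          _ = _ := by rw [← mul_assoc, this, one_mul]
      have hcont : Continuous fun ε : ℝ => sgn c * aF C B c (θ + ε • v) := by
        simp only [map_add, map_smul]; fun_prop
      have := (hcont.tendsto 0).eventually_lt_const (u := sgn c * bnd ξ c) (by simpa using hlt)
      exact this.mono fun ε h => h.le
  have ev2 : ∀ᶠ ε : ℝ in nhds 0, 0 ≤ ε * Fl C B f v := by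
    refine ev.mono fun ε hε => ?_
    have hfe : Feasible C B ξ sl (fun i => inj C B (θ + ε • v) (Fin.castAdd NL i)) (θ + ε • v) := by
      rw [feas_iff]
      refine ⟨fun h => ?_, fun j => ?_, fun _ => rfl, hε⟩
      · simp [hf'.1 h, hv.1 h]
      · simp [hf'.2.1 j, hv.2.1 j]
    have := hopt _ _ hfe
    rw [cost_eq C B hfe, cost_eq C B hf, map_add, map_smul, smul_eq_mul] at this
    linarith
  obtain ⟨δ, hδ, hb⟩ := Metric.eventually_nhds_iff.1 ev2
  have h1 := @hb (δ / 2) (by rw [Real.dist_eq, sub_zero, abs_of_pos] <;> linarith)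
  have h2 := @hb (-(δ / 2)) (by rw [Real.dist_eq, sub_zero, abs_neg, abs_of_pos] <;> linarith)
  nlinarith

section
variable {C B}
variable (hNG : 0 < NG) (hInc : IsIncidence C) (hConn : ConnectedIncidence C) (hB : PosDiag B)
include hInc in
lemma colsum (e : Fin E) : ∑ k, C k e = 0 := by
  obtain ⟨u, v, huv, hu, hv, hw⟩ := hInc e
  rw [← Finset.sum_subset (Finset.subset_univ {u, v})]
  · rw [Finset.sum_pair huv, hu, hv]; norm_num
  · intro x _ hx
    simp at hx
    exact hw x hx.1 hx.2

include hInc in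
lemma sum_inj (v : Fin (NG + NL) → ℝ) : ∑ k, inj C B v k = 0 := by
  rw [← inj_def, Matrix.mul_assoc, ← Matrix.mulVec_mulVec]
  simp only [Matrix.mulVec, dotProduct]
  rw [Finset.sum_comm]
  refine Finset.sum_eq_zero fun e _ => ?_
  rw [← Finset.sum_mul, colsum hInc, zero_mul]

lemma quad (v w : Fin (NG + NL) → ℝ) : v ⬝ᵥ inj C B w = (Cᵀ *ᵥ v) ⬝ᵥ flow C B w := by
  rw [← inj_def, ← flow_def, Matrix.mul_assoc, ← Matrix.mulVec_mulVec, Matrix.dotProduct_mulVec, Matrix.mulVec_transpose]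

include hB in
lemma flow_apply (v : Fin (NG + NL) → ℝ) (e : Fin E) : flow C B v e = B e e * (Cᵀ *ᵥ v) e := by
  rw [← flow_def, ← Matrix.mulVec_mulVec, Matrix.mulVec, dotProduct,
    Finset.sum_eq_single e]
  · intro b _ hb; rw [hB.2 e b hb.symm, zero_mul]
  · simp

include hConn hB in
lemma const_of_flow {v : Fin (NG + NL) → ℝ} (h : flow C B v = 0)
    (h0 : ∀ h : 0 < NG + NL, v ⟨0, h⟩ = 0) : v = 0 := by
  have : Cᵀ *ᵥ v = 0 := by
    funext e
    have := congrFun h e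
    rw [flow_apply hB] at this
    exact (mul_eq_zero.1 this).resolve_left (hB.1 e).ne'
  obtain ⟨c, hc⟩ := (hConn v).1 this
  funext k
  have := h0 (k.pos)
  rw [hc] at this ⊢
  exact this

include hConn hB in
lemma inj_zero {v : Fin (NG + NL) → ℝ} (h : inj C B v = 0)
    (h0 : ∀ h : 0 < NG + NL, v ⟨0, h⟩ = 0) : v = 0 := by
  refine const_of_flow hConn hB ?_ h0
  have q := quad (C := C) (B := B) v v
  rw [h, dotProduct_zero, dotProduct] at q
  have hn : ∀ e ∈ Finset.univ, 0 ≤ (Cᵀ *ᵥ v) e * flow C B v e := by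
    intro e _
    rw [flow_apply hB]
    nlinarith [hB.1 e, sq_nonneg ((Cᵀ *ᵥ v) e), mul_nonneg (hB.1 e).le (sq_nonneg ((Cᵀ *ᵥ v) e))]
  have := (Finset.sum_eq_zero_iff_of_nonneg hn).1 q.symm
  funext e
  have h1 := this e (Finset.mem_univ e)
  rw [flow_apply hB] at h1 ⊢
  have : (Cᵀ *ᵥ v) e = 0 := by
    rcases mul_eq_zero.1 h1 with h | h
    · exact h
    · exact (mul_eq_zero.1 h).resolve_left (hB.1 e).ne'
  simp [this]

include hNG hInc hConn hB in
lemma solve (s : Fin (NG + NL) → ℝ) (hs : ∑ k, s k = 0) :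
    ∃ θ, (∀ h : 0 < NG + NL, θ ⟨0, h⟩ = 0) ∧ inj C B θ = s := by
  have hN : 0 < NG + NL := by omega
  let A : (Fin (NG + NL) → ℝ) →ₗ[ℝ] (Fin (NG + NL) → ℝ) :=
    inj C B + LinearMap.pi fun _ => LinearMap.proj ⟨0, hN⟩
  have hA : ∀ v k, A v k = inj C B v k + v ⟨0, hN⟩ := fun v k => rfl
  have key : ∀ v, ∑ k, A v k = 0 → v ⟨0, hN⟩ = 0 := by
    intro v hv
    simp only [hA, Finset.sum_add_distrib, sum_inj hInc] at hv
    simp at hv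
    rcases hv with hv | hv
    · have : ((NG + NL : ℕ) : ℝ) = 0 := by push_cast; exact hv
      have := Nat.cast_eq_zero.1 this
      omega
    · exact hv
  have inje : Function.Injective A := by
    rw [injective_iff_map_eq_zero]
    intro v hv
    have h0 := key v (by simp [hv])
    refine inj_zero hConn hB ?_ (fun _ => h0)
    funext k
    have := congrFun hv k
    rw [hA, h0, add_zero] at this
    exact this
  obtain ⟨θ, hθ⟩ := (LinearMap.injective_iff_surjective.1 inje) s
  have h0 := key θ (by rw [hθ]; exact hs)
  refine ⟨θ, fun _ => h0, ?_⟩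
  funext k
  rw [← hθ, hA, h0, add_zero]

omit C B in
lemma dense_ne {V : Type*} [NormedAddCommGroup V] [NormedSpace ℝ V] [FiniteDimensional ℝ V]
    (φ : V →ₗ[ℝ] ℝ) (h : φ ≠ 0) (a : ℝ) : IsOpen {x | φ x ≠ a} ∧ Dense {x | φ x ≠ a} := by
  have hs : Function.Surjective φ := LinearMap.surjective h
  constructor
  · exact isOpen_ne_fun φ.continuous_of_finiteDimensional continuous_const
  · exact (dense_compl_singleton a).preimage (φ.isOpenMap_of_finiteDimensional hs)

include hConn hB in
lemma exists_f : ∃ f : Fin NG → ℝ, (∀ i, 0 < f i) ∧ GenF C B f := by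
  classical
  have H : ∀ T : Finset (Idx NG E), ∃ O : Set (Fin NG → ℝ), IsOpen O ∧ Dense O ∧
      ∀ f ∈ O, (∃ v, v ≠ 0 ∧ InK C B T v) → ∃ v, InK C B T v ∧ Fl C B f v ≠ 0 := by
    intro T
    by_cases hT : ∃ v, v ≠ 0 ∧ InK C B T v
    · obtain ⟨v, hv, hK⟩ := hT
      let φ : (Fin NG → ℝ) →ₗ[ℝ] ℝ :=
        ∑ i, inj C B v (Fin.castAdd NL i) • LinearMap.proj i
      have hφ : ∀ f, φ f = Fl C B f v := by
        intro f; rw [Fl_apply]; simp [φ, LinearMap.sum_apply, mul_comm]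
      have hne : φ ≠ 0 := by
        intro h0
        apply hv
        refine inj_zero hConn hB ?_ hK.1
        funext k
        refine Fin.addCases (fun i => ?_) (fun j => ?_) k
        · have := congrArg (fun ψ => ψ (Pi.single i 1)) h0
          simpa [φ, LinearMap.sum_apply, Pi.single_apply] using this
        · exact hK.2.1 j
      obtain ⟨ho, hd⟩ := dense_ne φ hne 0
      exact ⟨_, ho, hd, fun f hf _ => ⟨v, hK, by rw [← hφ]; exact hf⟩⟩
    · exact ⟨Set.univ, isOpen_univ, dense_univ, fun _ _ h => absurd h hT⟩
  choose O ho hd hO using H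
  have hD := dense_iInter_of_isOpen ho hd
  have hpos : IsOpen {f : Fin NG → ℝ | ∀ i, 0 < f i} := by
    simp only [Set.ofPred_forall]
    exact isOpen_iInter_of_finite fun i => isOpen_lt continuous_const (continuous_apply i)
  obtain ⟨f, hf1, hf2⟩ := hD.inter_open_nonempty _ hpos ⟨fun _ => 1, fun _ => one_pos⟩
  exact ⟨f, hf1, fun T => hO T f (Set.mem_iInter.1 hf2 T)⟩

lemma small_T (T : Finset (Idx NG E)) (hT : T.card + 1 < NG) : ∃ v, v ≠ 0 ∧ InK C B T v := by
  have hN : 0 < NG + NL := by omega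
  let A : (Fin (NG + NL) → ℝ) →ₗ[ℝ] (ℝ × (Fin NL → ℝ) × (T → ℝ)) :=
    (LinearMap.proj ⟨0, hN⟩).prod
      ((LinearMap.pi fun j => LinearMap.proj (Fin.natAdd NG j) ∘ₗ inj C B).prod
        (LinearMap.pi fun c : T => aF C B c.1))
  have := LinearMap.ker_ne_bot_of_finrank_lt (f := A) (by simp; omega)
  obtain ⟨v, hv, hv0⟩ := (Submodule.ne_bot_iff _).1 this
  refine ⟨v, hv0, ?_⟩
  have hA : A v = 0 := hv
  have h1 : v ⟨0, hN⟩ = 0 := congrArg (fun p => p.1) hA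
  have h2 : ∀ j, inj C B v (Fin.natAdd NG j) = 0 := fun j => congrArg (fun p => p.2.1 j) hA
  have h3 : ∀ c : T, aF C B c.1 v = 0 := fun c => congrArg (fun p => p.2.2 c) hA
  exact ⟨fun _ => h1, h2, fun c hc => h3 ⟨c, hc⟩⟩

include hNG in
lemma count_ge {f : Fin NG → ℝ} {ξ : XiT NG E} {sl : Fin NL → ℝ} {sg : Fin NG → ℝ}
    {θ : Fin (NG + NL) → ℝ} (hf : GenF C B f) (h : IsOptimal C B f ξ sl sg θ) :
    NG - 1 ≤ (bind C B ξ θ).card := by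
  by_contra hc
  obtain ⟨v, hv, hne⟩ := hf _ (small_T (bind C B ξ θ) (by omega))
  exact hne (move C B h hv)


lemma kkt_count {f : Fin NG → ℝ} {ξ : XiT NG E} {sl : Fin NL → ℝ} (hB : PosDiag B)
    (hf : GenF C B f) (sg : Fin NG → ℝ) (θ : Fin (NG + NL) → ℝ)
    (τ : Fin (NG + NL + 1) → ℝ) (μp μm : Fin E → ℝ) (lp lm : Fin NG → ℝ)
    (h : IsKKT C B f ξ sl sg θ τ μp μm lp lm) :
    NG - 1 ≤ nnz μp + nnz μm + nnz lp + nnz lm := by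
  classical
  obtain ⟨-, hst, hgen, -⟩ := h
  by_contra hlt
  let mult : Idx NG E → ℝ := fun c => match c with
    | Sum.inl i => lp i
    | Sum.inr (Sum.inl i) => lm i
    | Sum.inr (Sum.inr (Sum.inl e)) => μp e
    | Sum.inr (Sum.inr (Sum.inr e)) => μm e
  let T : Finset (Idx NG E) := Finset.univ.filter fun c => mult c ≠ 0
  have hcard : T.card = nnz μp + nnz μm + nnz lp + nnz lm := by
    simp only [T, mult]
    rw [Finset.card_filter, Fintype.sum_sum_type, Fintype.sum_sum_type, Fintype.sum_sum_type]
    simp only [nnz, Set.ncard_eq_toFinset_card', Set.toFinset_ofPred, Finset.card_filter]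
    have e1 : ∀ a b c d : ℕ, a + (b + (c + d)) = c + d + a + b := by intros; omega
    rw [e1]
  obtain ⟨v, ⟨h0, h1, h2⟩, hne⟩ := hf T (small_T T (by omega))
  have hz : ∀ c, mult c * aF C B c v = 0 := by
    intro c
    by_cases hc : mult c = 0
    · rw [hc, zero_mul]
    · rw [h2 c (by simp [T, hc]), mul_zero]
  apply hne
  have hBt : Bᵀ = B := by
    ext e e'
    rw [Matrix.transpose_apply]
    by_cases he : e = e'
    · rw [he]
    · rw [hB.2 _ _ he, hB.2 _ _ (Ne.symm he)]
  have hd := congrArg (fun x => v ⬝ᵥ x) hst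
  simp only [dotProduct_add, dotProduct_zero] at hd
  have e2 : v ⬝ᵥ (C * B) *ᵥ (μp - μm) = 0 := by
    rw [Matrix.dotProduct_mulVec, ← Matrix.mulVec_transpose, Matrix.transpose_mul, hBt, flow_def]
    refine Finset.sum_eq_zero fun e _ => ?_
    have a1 := hz (Sum.inr (Sum.inr (Sum.inl e)))
    have a2 := hz (Sum.inr (Sum.inr (Sum.inr e)))
    simp only [mult, aF, LinearMap.comp_apply, LinearMap.proj_apply] at a1 a2
    simp only [Pi.sub_apply]
    linarith
  have e1 : v ⬝ᵥ (Mmat C B)ᵀ *ᵥ τ = Fl C B f v := by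
    rw [Matrix.dotProduct_mulVec, Matrix.vecMul_transpose, dotProduct, Fin.sum_univ_castSucc,
      Fin.sum_univ_add]
    have r1 : ∀ k : Fin (NG + NL), (Mmat C B *ᵥ v) k.castSucc = inj C B v k := by
      intro k
      rw [← inj_def]
      simp [Matrix.mulVec, dotProduct, Mmat]
    have r2 : (Mmat C B *ᵥ v) (Fin.last _) = 0 := by
      rw [Matrix.mulVec, dotProduct]
      refine Finset.sum_eq_zero fun k _ => ?_
      by_cases hk : (k : ℕ) = 0
      · have : k = ⟨0, k.pos⟩ := Fin.ext hk
        rw [this, h0, mul_zero]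
      · simp [Mmat, hk]
    simp only [r1, r2, h1, zero_mul, Finset.sum_const_zero, add_zero]
    rw [Fl_apply]
    refine Finset.sum_congr rfl fun i _ => ?_
    have a1 := hz (Sum.inl i)
    have a2 := hz (Sum.inr (Sum.inl i))
    simp only [mult, aF, LinearMap.comp_apply, LinearMap.proj_apply] at a1 a2
    have hg := hgen i
    have ht : Fin.castLE (by omega) i = (Fin.castAdd NL i).castSucc := rfl
    rw [ht] at hg
    have : τ (Fin.castAdd NL i).castSucc = f i + lp i - lm i := by linarith
    rw [this]
    linear_combination a1 - a2
  rw [e1, e2, add_zero] at hd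
  exact hd

lemma midpoint_feas {ξ : XiT NG E} {sl sl' : Fin NL → ℝ} {sg sg' : Fin NG → ℝ}
    {θ θ' : Fin (NG + NL) → ℝ} (h : Feasible C B ξ sl sg θ) (h' : Feasible C B ξ sl' sg' θ')
    {a b : ℝ} (ha : 0 ≤ a) (hb : 0 ≤ b) (hab : a + b = 1) :
    Feasible C B ξ (a • sl + b • sl') (a • sg + b • sg') (a • θ + b • θ') := by
  rw [feas_iff] at h h' ⊢
  obtain ⟨h0, h1, h2, h3⟩ := h
  obtain ⟨h0', h1', h2', h3'⟩ := h'
  refine ⟨fun h => ?_, fun j => ?_, fun i => ?_, fun c => ?_⟩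
  · simp [h0 h, h0' h]
  · simp [h1, h1']; ring
  · simp [h2, h2']
  · have := mul_le_mul_of_nonneg_left (h3 c) ha
    have := mul_le_mul_of_nonneg_left (h3' c) hb
    have e : sgn c * bnd ξ c = a * (sgn c * bnd ξ c) + b * (sgn c * bnd ξ c) := by
      rw [← add_mul, hab, one_mul]
    rw [e]
    simp only [map_add, map_smul, smul_eq_mul]
    linarith

lemma unique_opt {f : Fin NG → ℝ} {ξ : XiT NG E} {sl : Fin NL → ℝ} (hf : GenF C B f)
    {sg sg' : Fin NG → ℝ} {θ θ' : Fin (NG + NL) → ℝ} (h : IsOptimal C B f ξ sl sg θ)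
    (h' : IsOptimal C B f ξ sl sg' θ') : sg = sg' ∧ θ = θ' := by
  suffices hθ : θ = θ' by
    refine ⟨?_, hθ⟩
    funext i
    rw [((feas_iff ..).1 h.1).2.2.1 i, ((feas_iff ..).1 h'.1).2.2.1 i, hθ]
  by_contra hne
  have hm := midpoint_feas h.1 h'.1 (a := 1/2) (b := 1/2) (by norm_num) (by norm_num) (by norm_num)
  have hsl : (1/2 : ℝ) • sl + (1/2 : ℝ) • sl = sl := by
    rw [← add_smul]; norm_num
  rw [hsl] at hm
  have hopt : IsOptimal C B f ξ sl ((1/2 : ℝ) • sg + (1/2 : ℝ) • sg')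
      ((1/2 : ℝ) • θ + (1/2 : ℝ) • θ') := by
    refine ⟨hm, fun s t hst => ?_⟩
    have a1 := h.2 _ _ hst
    have a2 := h'.2 _ _ hst
    simp only [dotProduct_add, dotProduct_smul, smul_eq_mul]
    linarith
  have hK : InK C B (bind C B ξ ((1/2 : ℝ) • θ + (1/2 : ℝ) • θ')) (θ - θ') := by
    have p := (feas_iff ..).1 h.1
    have q := (feas_iff ..).1 h'.1
    refine ⟨fun h => ?_, fun j => ?_, fun c hc => ?_⟩
    · simp [p.1 h, q.1 h]
    · simp [p.2.1, q.2.1]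
    · rw [mem_bind] at hc
      have a1 := p.2.2.2 c
      have a2 := q.2.2.2 c
      simp only [map_add, map_smul, smul_eq_mul] at hc
      rw [map_sub]
      have : sgn c = 1 ∨ sgn c = -1 := mul_self_eq_one_iff.1 (sgn_sq c)
      rcases this with s | s <;> rw [s] at a1 a2 <;> linarith
  obtain ⟨v, hv, hv'⟩ := hf _ ⟨_, sub_ne_zero.2 hne, hK⟩
  exact hv' (move C B hopt hv)

include hNG hConn hB in
lemma exists_opt (f : Fin NG → ℝ) {ξ : XiT NG E} {sl : Fin NL → ℝ}
    (h : ∃ sg θ, Feasible C B ξ sl sg θ) : ∃ sg θ, IsOptimal C B f ξ sl sg θ := by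
  have hN : 0 < NG + NL := by omega
  let A : ((Fin NG → ℝ) × (Fin (NG + NL) → ℝ)) →ₗ[ℝ] ((Fin NG → ℝ) × (Fin E → ℝ) × ℝ) :=
    (LinearMap.fst ℝ _ _).prod ((flow C B ∘ₗ LinearMap.snd ℝ _ _).prod
      (LinearMap.proj ⟨0, hN⟩ ∘ₗ LinearMap.snd ℝ _ _))
  have hA : ∀ p, A p = (p.1, flow C B p.2, p.2 ⟨0, hN⟩) := fun p => rfl
  have hker : LinearMap.ker A = ⊥ := by
    rw [LinearMap.ker_eq_bot']
    rintro ⟨s, t⟩ hst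
    rw [hA] at hst
    simp only [Prod.mk_eq_zero] at hst ⊢
    exact ⟨hst.1, const_of_flow hConn hB hst.2.1 fun _ => hst.2.2⟩
  have hcl := LinearMap.isClosedEmbedding_of_injective hker
  have hK : IsCompact (A ⁻¹' (Set.Icc ξ.2.1 ξ.1 ×ˢ Set.Icc ξ.2.2.2 ξ.2.2.1 ×ˢ ({0} : Set ℝ))) :=
    hcl.isCompact_preimage (isCompact_Icc.prod (isCompact_Icc.prod isCompact_singleton))
  have hS : {p : (Fin NG → ℝ) × (Fin (NG + NL) → ℝ) | Feasible C B ξ sl p.1 p.2} =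
      (A ⁻¹' (Set.Icc ξ.2.1 ξ.1 ×ˢ Set.Icc ξ.2.2.2 ξ.2.2.1 ×ˢ ({0} : Set ℝ))) ∩
      {p | inj C B p.2 = Fin.append p.1 (fun j => -(sl j))} := by
    ext ⟨s, t⟩
    simp only [Set.mem_ofPred_eq, Set.mem_inter_iff, Set.mem_preimage, hA, Set.mem_prod, Set.mem_Icc,
      Set.mem_singleton_iff, Pi.le_def, Feasible, inj_def, flow_def]
    constructor
    · rintro ⟨h0, h1, h2, h3⟩
      exact ⟨⟨⟨fun i => (h2 i).1, fun i => (h2 i).2⟩, ⟨fun i => (h3 i).1, fun i => (h3 i).2⟩, h0 hN⟩, h1⟩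
    · rintro ⟨⟨⟨a1, a2⟩, ⟨a3, a4⟩, a5⟩, h1⟩
      exact ⟨fun _ => a5, h1, fun i => ⟨a1 i, a2 i⟩, fun i => ⟨a3 i, a4 i⟩⟩
  have hclosed : IsClosed {p : (Fin NG → ℝ) × (Fin (NG + NL) → ℝ) |
      inj C B p.2 = Fin.append p.1 (fun j => -(sl j))} := by
    refine isClosed_eq ((inj C B).continuous_of_finiteDimensional.comp continuous_snd) ?_
    refine continuous_pi fun k => ?_
    refine Fin.addCases (fun i => ?_) (fun j => ?_) k
    · simp only [Fin.append_left]; fun_prop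
    · simp only [Fin.append_right]; fun_prop
  have hcomp : IsCompact {p : (Fin NG → ℝ) × (Fin (NG + NL) → ℝ) | Feasible C B ξ sl p.1 p.2} := by
    rw [hS]; exact hK.inter_right hclosed
  obtain ⟨sg, θ, hst⟩ := h
  have hcont : Continuous fun p : (Fin NG → ℝ) × (Fin (NG + NL) → ℝ) => f ⬝ᵥ p.1 := by
    unfold dotProduct; fun_prop
  obtain ⟨p, hp, hmin⟩ := hcomp.exists_isMinOn ⟨(sg, θ), hst⟩ hcont.continuousOn
  exact ⟨p.1, p.2, hp, fun s t hf => hmin (a := (s, t)) hf⟩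

include hNG hConn hB in
lemma mem_OmegaF {f : Fin NG → ℝ} (hpos : ∀ i, 0 < f i) (hf : GenF C B f) : f ∈ OmegaF C B := by
  refine ⟨fun i => (hpos i).le, fun ξ _ sl hsl => ⟨?_, kkt_count hB hf⟩⟩
  obtain ⟨s, t, h⟩ := exists_opt hNG hConn hB f hsl.2
  refine ⟨(s, t), h, fun q hq => ?_⟩
  obtain ⟨a, b⟩ := unique_opt hf hq h
  exact Prod.ext a b

def GenXi (C : Matrix (Fin (NG + NL)) (Fin E) ℝ) (B : Matrix (Fin E) (Fin E) ℝ) (ξ : XiT NG E) :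
    Prop := ∀ T : Finset (Idx NG E), T.card = NG → ∃ (y : Fin NL → ℝ) (t : Idx NG E → ℝ),
  (∀ θ, ∑ j, y j * inj C B θ (Fin.natAdd NG j) + ∑ c ∈ T, t c * aF C B c θ = 0) ∧
  (y ≠ 0 ∨ ∑ c ∈ T, t c * bnd ξ c ≠ 0)

include hNG hConn in
lemma exists_dep (T : Finset (Idx NG E)) (hT : T.card = NG) :
    ∃ (y : Fin NL → ℝ) (t : Idx NG E → ℝ),
      (∀ θ, ∑ j, y j * inj C B θ (Fin.natAdd NG j) + ∑ c ∈ T, t c * aF C B c θ = 0) ∧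
      (y ≠ 0 ∨ ∃ c ∈ T, t c ≠ 0) := by
  classical
  let A : (Fin (NG + NL) → ℝ) →ₗ[ℝ] (Fin NL ⊕ T → ℝ) := LinearMap.pi fun k => match k with
    | Sum.inl j => LinearMap.proj (Fin.natAdd NG j) ∘ₗ inj C B
    | Sum.inr c => aF C B c.1
  have hfl : flow C B (fun _ => (1 : ℝ)) = 0 := by
    rw [← flow_def, ← Matrix.mulVec_mulVec, (hConn _).2 ⟨1, rfl⟩, Matrix.mulVec_zero]
  have hin : inj C B (fun _ => (1 : ℝ)) = 0 := by
    rw [← inj_def, ← Matrix.mulVec_mulVec, (hConn _).2 ⟨1, rfl⟩, Matrix.mulVec_zero]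
  have h1 : A (fun _ => 1) = 0 := by
    funext k
    rcases k with j | ⟨c, hc⟩
    · exact congrFun hin _
    · rcases c with i | i | e | e
      · exact congrFun hin _
      · exact congrFun hin _
      · exact congrFun hfl _
      · exact congrFun hfl _
  have hns : LinearMap.range A < ⊤ := by
    rw [lt_top_iff_ne_top]
    intro htop
    have hs := LinearMap.range_eq_top.1 htop
    have hi := (LinearMap.injective_iff_surjective_of_finrank_eq_finrank (f := A) (by
      simp [hT]; omega)).2 hs
    have h2 := hi (h1.trans (map_zero A).symm)
    have := congrFun h2 ⟨0, by omega⟩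
    simp at this
  obtain ⟨φ, hφ, hle⟩ := Submodule.exists_le_ker_of_lt_top _ hns
  let t : Idx NG E → ℝ := fun c => if h : c ∈ T then φ (Pi.single (Sum.inr ⟨c, h⟩) 1) else 0
  have hx : ∀ x, φ x = ∑ j, φ (Pi.single (Sum.inl j) 1) * x (Sum.inl j) +
      ∑ c : T, φ (Pi.single (Sum.inr c) 1) * x (Sum.inr c) := by
    intro x
    conv_lhs => rw [LinearMap.pi_apply_eq_sum_univ φ x, Fintype.sum_sum_type]
    simp only [smul_eq_mul, mul_comm]
    have : ∀ k : Fin NL ⊕ T, (fun j => if k = j then (1 : ℝ) else 0) = Pi.single k 1 := by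
      intro k; funext j; simp [Pi.single_apply, eq_comm]
    simp only [this]
  refine ⟨fun j => φ (Pi.single (Sum.inl j) 1), t, fun θ => ?_, ?_⟩
  · have h0 : φ (A θ) = 0 := hle (LinearMap.mem_range_self A θ)
    rw [hx] at h0
    rw [← h0]
    congr 1
    rw [← Finset.sum_coe_sort T]
    refine Finset.sum_congr rfl fun c _ => ?_
    simp only [t, c.2, dif_pos]
    rfl
  · by_contra hcon
    push Not at hcon
    apply hφ
    ext x
    have hy := hcon.1
    have e1 : ∀ j, φ (Pi.single (Sum.inl j) 1) = 0 := fun j => congrFun hy j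
    have e2 : ∀ c : T, φ (Pi.single (Sum.inr c) 1) = 0 := by
      intro c
      have := hcon.2 c.1 c.2
      simp only [t, c.2, dif_pos] at this
      exact this
    rcases x with j | c
    · simpa using e1 j
    · simpa using e2 c

include hNG hConn in
lemma exists_xi (U : Set (XiT NG E)) (hU : IsOpen U) (hne : U.Nonempty) :
    ∃ ξ ∈ U, GenXi C B ξ := by
  classical
  have H : ∀ T : Finset (Idx NG E), ∃ O : Set (XiT NG E), IsOpen O ∧ Dense O ∧ ∀ ξ ∈ O,
      T.card = NG → ∃ (y : Fin NL → ℝ) (t : Idx NG E → ℝ),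
      (∀ θ, ∑ j, y j * inj C B θ (Fin.natAdd NG j) + ∑ c ∈ T, t c * aF C B c θ = 0) ∧
      (y ≠ 0 ∨ ∑ c ∈ T, t c * bnd ξ c ≠ 0) := by
    intro T
    by_cases hT : T.card = NG
    swap
    · exact ⟨Set.univ, isOpen_univ, dense_univ, fun _ _ h => absurd h hT⟩
    obtain ⟨y, t, hdep, h | ⟨c, hc, htc⟩⟩ := exists_dep (B := B) hNG hConn T hT
    · exact ⟨Set.univ, isOpen_univ, dense_univ, fun _ _ _ => ⟨y, t, hdep, Or.inl h⟩⟩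
    · let φ : XiT NG E →ₗ[ℝ] ℝ :=
        { toFun := fun ξ => ∑ c ∈ T, t c * bnd ξ c
          map_add' := by
            intro x z
            rw [← Finset.sum_add_distrib]
            refine Finset.sum_congr rfl fun c _ => ?_
            rcases c with i | i | e | e <;> simp [bnd, mul_add]
          map_smul' := by
            intro r x
            simp only [RingHom.id_apply, smul_eq_mul]
            rw [Finset.mul_sum]
            refine Finset.sum_congr rfl fun c _ => ?_
            rcases c with i | i | e | e <;> simp [bnd] <;> ring }
      have hφ : φ ≠ 0 := by
        intro h0
        have : φ (ofBnd (Pi.single c 1)) = 0 := by rw [h0]; rfl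
        apply htc
        have e : φ (ofBnd (Pi.single c 1)) = ∑ c' ∈ T, t c' * (Pi.single c 1 : Idx NG E → ℝ) c' := by
          simp only [φ, LinearMap.coe_mk, AddHom.coe_mk, bnd_ofBnd]
        rw [e, Finset.sum_eq_single c] at this
        · simpa using this
        · intro b _ hb; simp [hb]
        · intro h; exact absurd hc h
      obtain ⟨ho, hd⟩ := dense_ne φ hφ 0
      exact ⟨_, ho, hd, fun ξ hξ _ => ⟨y, t, hdep, Or.inr hξ⟩⟩
  choose O ho hd hO using H
  obtain ⟨ξ, h1, h2⟩ := (dense_iInter_of_isOpen ho hd).inter_open_nonempty U hU hne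
  exact ⟨ξ, h1, fun T => hO T ξ (Set.mem_iInter.1 h2 T)⟩

lemma convex_OmegaSl (ξ : XiT NG E) : Convex ℝ (OmegaSl C B ξ) := by
  rintro s ⟨hs, sg, θ, h⟩ s' ⟨hs', sg', θ', h'⟩ a b ha hb hab
  refine ⟨fun j => ?_, _, _, midpoint_feas h h' ha hb hab⟩
  exact (convex_Ioi (0 : ℝ)) (hs j) (hs' j) ha hb hab

include hNG in
lemma dense_T {f : Fin NG → ℝ} {ξ : XiT NG E} (hf : GenF C B f) (hξ : GenXi C B ξ)
    (hcl : closure (interior (OmegaSl C B ξ)) = closure (OmegaSl C B ξ)) :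
    OmegaSl C B ξ ⊆ closure (TOmegaSl C B f ξ) := by
  classical
  have H : ∀ T : Finset (Idx NG E), ∃ O : Set (Fin NL → ℝ), IsOpen O ∧ Dense O ∧ ∀ sl ∈ O,
      T.card = NG → ∀ sg θ, Feasible C B ξ sl sg θ → ¬ T ⊆ bind C B ξ θ := by
    intro T
    by_cases hT : T.card = NG
    swap
    · exact ⟨Set.univ, isOpen_univ, dense_univ, fun _ _ h => absurd h hT⟩
    obtain ⟨y, t, hdep, hor⟩ := hξ T hT
    have key : ∀ sl sg θ, Feasible C B ξ sl sg θ → T ⊆ bind C B ξ θ →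
        ∑ j, y j * sl j = ∑ c ∈ T, t c * bnd ξ c := by
      intro sl sg θ hfe hsub
      have h1 := hdep θ
      have h2 : ∑ c ∈ T, t c * aF C B c θ = ∑ c ∈ T, t c * bnd ξ c :=
        Finset.sum_congr rfl fun c hc => by rw [(mem_bind C B).1 (hsub hc)]
      have h3 := ((feas_iff ..).1 hfe).2.1
      simp only [h3, h2, mul_neg, Finset.sum_neg_distrib] at h1
      linarith
    by_cases hy : y = 0
    · refine ⟨Set.univ, isOpen_univ, dense_univ, fun sl _ _ sg θ hfe hsub => ?_⟩
      have := key sl sg θ hfe hsub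
      rcases hor with h | h
      · exact h hy
      · apply h; rw [← this, hy]; simp
    · let φ : (Fin NL → ℝ) →ₗ[ℝ] ℝ := ∑ j, y j • LinearMap.proj j
      have hφ : ∀ x, φ x = ∑ j, y j * x j := by intro x; simp [φ, LinearMap.sum_apply]
      have hne : φ ≠ 0 := by
        intro h0
        apply hy
        funext j
        have : φ (Pi.single j 1) = 0 := by rw [h0]; rfl
        simpa [hφ, Pi.single_apply] using this
      obtain ⟨ho, hd⟩ := dense_ne φ hne (∑ c ∈ T, t c * bnd ξ c)
      refine ⟨_, ho, hd, fun sl hsl _ sg θ hfe hsub => hsl ?_⟩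
      rw [hφ]
      exact key sl sg θ hfe hsub
  choose O ho hd hO using H
  have hD := dense_iInter_of_isOpen ho hd
  have hsub : interior (OmegaSl C B ξ) ∩ ⋂ T, O T ⊆ TOmegaSl C B f ξ := by
    rintro sl ⟨h1, h2⟩
    refine ⟨interior_subset h1, fun sg θ hopt => ?_⟩
    rw [count_eq C B hopt.1]
    refine le_antisymm ?_ (count_ge hNG hf hopt)
    by_contra hlt
    obtain ⟨T, hTs, hTc⟩ := Finset.exists_subset_card_eq (s := bind C B ξ θ) (n := NG) (by omega)
    exact hO T sl (Set.mem_iInter.1 h2 T) hTc sg θ hopt.1 hTs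
  calc OmegaSl C B ξ ⊆ closure (interior (OmegaSl C B ξ)) := by rw [hcl]; exact subset_closure
    _ ⊆ closure (interior (OmegaSl C B ξ) ∩ ⋂ T, O T) :=
        closure_minimal (hD.open_subset_closure_inter isOpen_interior) isClosed_closure
    _ ⊆ _ := closure_mono hsub

def up {SG : Finset (Fin NG)} {SB : Finset (Fin E)} : ↥SG ⊕ ↥SB → Idx NG E
  | Sum.inl g => Sum.inl g.1
  | Sum.inr e => Sum.inr (Sum.inr (Sum.inl e.1))

def low {SG : Finset (Fin NG)} {SB : Finset (Fin E)} : ↥SG ⊕ ↥SB → Idx NG E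
  | Sum.inl g => Sum.inr (Sum.inl g.1)
  | Sum.inr e => Sum.inr (Sum.inr (Sum.inr e.1))

lemma perp_inj {SG : Finset (Fin NG)} {SB : Finset (Fin E)} (hNG : 0 < NG)
    (hcard : SG.card + SB.card = NG - 1) (hperp : Perp C B SG SB) (v : Fin (NG + NL) → ℝ)
    (h0 : ∀ h : 0 < NG + NL, v ⟨0, h⟩ = 0) (h1 : ∀ j, inj C B v (Fin.natAdd NG j) = 0)
    (h2 : ∀ k : ↥SG ⊕ ↥SB, aF C B (up k) v = 0) : v = 0 := by
  let P : ((Fin NG → ℝ) × (Fin (NG + NL) → ℝ)) →ₗ[ℝ] ℝ :=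
    (∑ i, inj C B v (Fin.castAdd NL i) • (LinearMap.proj i ∘ₗ LinearMap.fst ℝ _ _)) +
    (∑ k, v k • (LinearMap.proj k ∘ₗ LinearMap.snd ℝ _ _))
  have hP : ∀ p, P p = (∑ i, p.1 i * inj C B v (Fin.castAdd NL i)) + p.2 ⬝ᵥ v := by
    intro p
    simp [P, LinearMap.add_apply, LinearMap.sum_apply, dotProduct, mul_comm]
  have hspan := LinearIndependent.span_eq_top_of_card_eq_finrank' hperp (by
    simp; omega)
  have hz : P = 0 := by
    refine LinearMap.ext_on_range hspan ?_
    rintro ((u | i) | (g | e))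
    · simp only [hP, eqGrad, Pi.zero_apply, zero_mul, Finset.sum_const_zero, zero_add,
        LinearMap.zero_apply, dotProduct]
      refine Finset.sum_eq_zero fun k _ => ?_
      by_cases hk : (k : ℕ) = 0
      · have : k = ⟨0, k.pos⟩ := Fin.ext hk
        rw [this, h0, mul_zero]
      · simp [hk]
    · have hrow : (fun j => (C * B * Cᵀ) i j) ⬝ᵥ v = inj C B v i := rfl
      simp only [hP, eqGrad, LinearMap.zero_apply, hrow]
      clear hrow
      revert i
      refine Fin.addCases (fun i => ?_) (fun j => ?_)
      · rw [Finset.sum_eq_single i]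
        · simp
        · intro b _ hb
          have : (b : ℕ) ≠ (i : ℕ) := fun h => hb (Fin.ext h)
          simp [this]
        · simp
      · rw [h1 j, add_zero]
        refine Finset.sum_eq_zero fun k _ => ?_
        have : (k : ℕ) ≠ NG + (j : ℕ) := by have := k.2; omega
        simp [this]
    · have := h2 (Sum.inl g)
      simp only [up, aF, LinearMap.comp_apply, LinearMap.proj_apply] at this
      simp only [hP, LinearMap.zero_apply, zero_dotProduct, add_zero]
      rw [Finset.sum_eq_single g.1]
      · simp [this]
      · intro b _ hb; simp [hb]
      · simp
    · have := h2 (Sum.inr e)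
      simp only [up, aF, LinearMap.comp_apply, LinearMap.proj_apply] at this
      simp only [hP, LinearMap.zero_apply, Pi.zero_apply, zero_mul, Finset.sum_const_zero, zero_add]
      exact this
  funext k
  have : P (0, Pi.single k 1) = 0 := by rw [hz]; rfl
  simpa [hP] using this

/-- the underlying generator or branch -/
def und : Idx NG E → Fin NG ⊕ Fin E
  | Sum.inl i => Sum.inl i
  | Sum.inr (Sum.inl i) => Sum.inl i
  | Sum.inr (Sum.inr (Sum.inl e)) => Sum.inr e
  | Sum.inr (Sum.inr (Sum.inr e)) => Sum.inr e

lemma und_eq {SG : Finset (Fin NG)} {SB : Finset (Fin E)} {ι : ↥SG ⊕ ↥SB → Idx NG E}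
    (hι : ∀ k, ι k = up k ∨ ι k = low k) (k : ↥SG ⊕ ↥SB) :
    und (ι k) = Sum.map Subtype.val Subtype.val k := by
  rcases hι k with h | h <;> rw [h] <;> rcases k with k | k <;> rfl

lemma und_inj {SG : Finset (Fin NG)} {SB : Finset (Fin E)} {ι : ↥SG ⊕ ↥SB → Idx NG E}
    (hι : ∀ k, ι k = up k ∨ ι k = low k) {k k' : ↥SG ⊕ ↥SB} (h : und (ι k) = und (ι k')) :
    k = k' := by
  rw [und_eq hι, und_eq hι] at h
  exact (Sum.map_injective.2 ⟨Subtype.val_injective, Subtype.val_injective⟩) h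

lemma hno {SG : Finset (Fin NG)} {SB : Finset (Fin E)} {ι : ↥SG ⊕ ↥SB → Idx NG E}
    (hι : ∀ k, ι k = up k ∨ ι k = low k) {c c' : Idx NG E} (h : und c = und c') (hne : c ≠ c')
    (hc : c ∈ Set.range ι) : c' ∉ Set.range ι := by
  rintro ⟨k', rfl⟩
  obtain ⟨k, rfl⟩ := hc
  exact hne (congrArg ι (und_inj hι h))

lemma aF_low {SG : Finset (Fin NG)} {SB : Finset (Fin E)} (k : ↥SG ⊕ ↥SB) :
    aF C B (low k) = aF C B (up k) := by rcases k with k | k <;> rfl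

lemma continuous_bnd (c : Idx NG E) : Continuous fun ξ : XiT NG E => bnd ξ c := by
  rcases c with i | i | e | e <;> simp only [bnd] <;> fun_prop

set_option maxHeartbeats 1000000 in
include hNG hInc hConn hB in
lemma local_part (hNL : 0 < NL) {SG : Finset (Fin NG)} {SB : Finset (Fin E)}
    (hcard : SG.card + SB.card = NG - 1) (hperp : Perp C B SG SB) {f : Fin NG → ℝ}
    (hf : GenF C B f) :
    ∃ ι : ↥SG ⊕ ↥SB → Idx NG E, (∀ k, ι k = up k ∨ ι k = low k) ∧
      ∃ U : Set (XiT NG E × (Fin NL → ℝ)), IsOpen U ∧ U.Nonempty ∧ ∀ q ∈ U,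
        (∀ i, 0 ≤ q.1.2.1 i) ∧ (∀ i, q.1.2.1 i < q.1.1 i) ∧ (∀ e, q.1.2.2.2 e < q.1.2.2.1 e) ∧
        (∀ j, 0 < q.2 j) ∧ ∃ sg θ, IsOptimal C B f q.1 q.2 sg θ ∧
          ∀ c, aF C B c θ = bnd q.1 c ↔ c ∈ Set.range ι := by
  classical
  have hN : 0 < NG + NL := by omega
  let A : (Fin (NG + NL) → ℝ) →ₗ[ℝ] (ℝ × (Fin NL → ℝ) × (↥SG ⊕ ↥SB → ℝ)) :=
    (LinearMap.proj ⟨0, hN⟩).prod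
      ((LinearMap.pi fun j => -(LinearMap.proj (Fin.natAdd NG j) ∘ₗ inj C B)).prod
        (LinearMap.pi fun k => aF C B (up k)))
  have hA : ∀ v, A v = (v ⟨0, hN⟩, fun j => - inj C B v (Fin.natAdd NG j),
    fun k => aF C B (up k) v) := fun v => rfl
  have hAi : Function.Injective A := by
    rw [injective_iff_map_eq_zero]
    intro v hv
    rw [hA] at hv
    simp only [Prod.mk_eq_zero] at hv
    exact perp_inj hNG hcard hperp v (fun _ => hv.1)
      (fun j => neg_eq_zero.1 (congrFun hv.2.1 j)) (fun k => congrFun hv.2.2 k)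
  have hAs : Function.Surjective A :=
    (LinearMap.injective_iff_surjective_of_finrank_eq_finrank (f := A) (by simp; omega)).1 hAi
  let Ψ := LinearEquiv.ofBijective A ⟨hAi, hAs⟩
  have hΨ : ∀ v, Ψ v = A v := fun v => rfl
  let ac : ↥SG ⊕ ↥SB → ℝ := fun k => Fl C B f (Ψ.symm (0, 0, Pi.single k 1))
  have hG : ∀ x : ↥SG ⊕ ↥SB → ℝ, Fl C B f (Ψ.symm (0, 0, x)) = ∑ k, ac k * x k := by
    intro x
    let g : (↥SG ⊕ ↥SB → ℝ) →ₗ[ℝ] ℝ := Fl C B f ∘ₗ Ψ.symm.toLinearMap ∘ₗ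
      LinearMap.inr ℝ ℝ _ ∘ₗ LinearMap.inr ℝ (Fin NL → ℝ) _
    have hg : ∀ x, g x = Fl C B f (Ψ.symm (0, 0, x)) := fun x => rfl
    rw [← hg, LinearMap.pi_apply_eq_sum_univ g x]
    refine Finset.sum_congr rfl fun k _ => ?_
    have : (fun j => if k = j then (1 : ℝ) else 0) = Pi.single k 1 := by
      funext j; simp [Pi.single_apply, eq_comm]
    rw [this, hg, smul_eq_mul, mul_comm]
  have hF : ∀ v, v ⟨0, hN⟩ = 0 → (∀ j, inj C B v (Fin.natAdd NG j) = 0) →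
      Fl C B f v = ∑ k, ac k * aF C B (up k) v := by
    intro v h0 h1
    rw [← hG (fun k => aF C B (up k) v)]
    congr 1
    rw [LinearEquiv.eq_symm_apply, hΨ, hA, h0]
    simp only [h1, neg_zero]
    rfl
  have hac : ∀ k, ac k ≠ 0 := by
    intro k hk
    let u := Ψ.symm (0, 0, Pi.single k 1)
    have hu : A u = (0, 0, Pi.single k 1) := Ψ.apply_symm_apply _
    rw [hA] at hu
    simp only [Prod.mk.injEq] at hu
    have hu0 : u ≠ 0 := by
      intro h
      have := congrFun hu.2.2 k
      rw [h] at this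
      simp at this
    let T : Finset (Idx NG E) := (Finset.univ.erase k).image up
    obtain ⟨v, hv, hne⟩ := hf T ⟨u, hu0, fun _ => hu.1,
      fun j => neg_eq_zero.1 (congrFun hu.2.1 j), fun c hc => by
        obtain ⟨k', hk', rfl⟩ := Finset.mem_image.1 hc
        have := congrFun hu.2.2 k'
        simpa [Finset.ne_of_mem_erase hk'] using this⟩
    apply hne
    rw [hF v (hv.1 hN) hv.2.1]
    refine Finset.sum_eq_zero fun k' _ => ?_
    by_cases hkk : k' = k
    · rw [hkk, hk, zero_mul]
    · rw [hv.2.2 _ (Finset.mem_image_of_mem _ (Finset.mem_erase.2 ⟨hkk, Finset.mem_univ _⟩)),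
        mul_zero]
  let ι : ↥SG ⊕ ↥SB → Idx NG E := fun k => if 0 < ac k then low k else up k
  have hι : ∀ k, ι k = up k ∨ ι k = low k := by
    intro k; by_cases h : 0 < ac k <;> simp [ι, h]
  have haι : ∀ k, aF C B (ι k) = aF C B (up k) := by
    intro k
    rcases hι k with h | h <;> rw [h]
    exact aF_low k
  have hsgn : ∀ k, sgn (ι k) * ac k < 0 := by
    intro k
    by_cases h : 0 < ac k
    · have : sgn (low k) = -1 := by rcases k with k | k <;> rfl
      simp [ι, h, this]
    · have h' : ac k < 0 := lt_of_le_of_ne (not_lt.1 h) (hac k)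
      have : sgn (up k) = 1 := by rcases k with k | k <;> rfl
      simp [ι, h, this, h']
  refine ⟨ι, hι, ?_⟩
  let Θ : XiT NG E × (Fin NL → ℝ) → (Fin (NG + NL) → ℝ) := fun q =>
    Ψ.symm (0, q.2, fun k => bnd q.1 (ι k))
  have hΘc : Continuous Θ := by
    refine Ψ.symm.toLinearMap.continuous_of_finiteDimensional.comp ?_
    refine continuous_const.prodMk (continuous_snd.prodMk (continuous_pi fun k => ?_))
    exact (continuous_bnd _).comp continuous_fst
  have hΘ : ∀ q, A (Θ q) = (0, q.2, fun k => bnd q.1 (ι k)) := fun q => Ψ.apply_symm_apply _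
  let U : Set (XiT NG E × (Fin NL → ℝ)) := {q | (∀ i, 0 < q.1.2.1 i) ∧
    (∀ i, q.1.2.1 i < q.1.1 i) ∧ (∀ e, q.1.2.2.2 e < q.1.2.2.1 e) ∧ (∀ j, 0 < q.2 j) ∧
    ∀ c : {c : Idx NG E // c ∉ Set.range ι}, sgn c.1 * aF C B c.1 (Θ q) < sgn c.1 * bnd q.1 c.1}
  refine ⟨U, ?_, ?_, ?_⟩
  · have hall : ∀ {κ : Type} [Finite κ] (p : κ → XiT NG E × (Fin NL → ℝ) → Prop),
        (∀ k, IsOpen {q | p k q}) → IsOpen {q | ∀ k, p k q} := by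
      intro κ _ p hp
      rw [Set.ofPred_forall]
      exact isOpen_iInter_of_finite hp
    refine IsOpen.and (hall _ fun i => ?_) (IsOpen.and (hall _ fun i => ?_)
      (IsOpen.and (hall _ fun i => ?_) (IsOpen.and (hall _ fun i => ?_) (hall _ fun c => ?_))))
    · exact isOpen_lt (by fun_prop) (by fun_prop)
    · exact isOpen_lt (by fun_prop) (by fun_prop)
    · exact isOpen_lt (by fun_prop) (by fun_prop)
    · exact isOpen_lt (by fun_prop) (by fun_prop)
    · refine isOpen_lt ?_ ?_
      · exact continuous_const.mul ((aF C B c.1).continuous_of_finiteDimensional.comp hΘc)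
      · exact continuous_const.mul ((continuous_bnd _).comp continuous_fst)
  · obtain ⟨θ0, hz0, hθ0⟩ := solve (B := B) hNG hInc hConn hB
      (Fin.append (fun _ : Fin NG => (NL : ℝ)) (fun _ : Fin NL => -(NG : ℝ))) (by
        rw [Fin.sum_univ_add]; simp; ring)
    let b : Idx NG E → ℝ := fun c =>
      aF C B c θ0 + if c ∈ Set.range ι then 0 else sgn c * (1 / 2)
    have hq : Θ (ofBnd b, fun _ => (NG : ℝ)) = θ0 := by
      simp only [Θ]
      rw [LinearEquiv.symm_apply_eq, hΨ, hA, hz0 hN, hθ0, bnd_ofBnd]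
      simp only [Fin.append_right, neg_neg, Prod.mk.injEq, true_and]
      funext k
      simp only [b, Set.mem_range_self, if_true, add_zero, haι]
    have hgen : ∀ i, inj C B θ0 (Fin.castAdd NL i) = (NL : ℝ) := by
      intro i; rw [hθ0]; simp
    have hNL1 : (1 : ℝ) ≤ NL := by exact_mod_cast hNL
    have hno1 : ∀ i : Fin NG, Sum.inl i ∈ Set.range ι → Sum.inr (Sum.inl i) ∉ Set.range ι := by
      exact fun i h => hno hι (c := Sum.inl i) (c' := Sum.inr (Sum.inl i)) rfl (by simp) h
    have hno2 : ∀ e : Fin E, Sum.inr (Sum.inr (Sum.inl e)) ∈ Set.range ι →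
        Sum.inr (Sum.inr (Sum.inr e)) ∉ Set.range ι := by
      exact fun e h => hno hι (c := Sum.inr (Sum.inr (Sum.inl e)))
        (c' := Sum.inr (Sum.inr (Sum.inr e))) rfl (by simp) h
    refine ⟨(ofBnd b, fun _ => (NG : ℝ)), fun i => ?_, fun i => ?_, fun e => ?_, fun j => ?_,
      fun c => ?_⟩
    · simp only [ofBnd, b, aF, LinearMap.comp_apply, LinearMap.proj_apply, hgen, sgn]
      split_ifs <;> linarith
    · have := hno1 i
      simp only [ofBnd, b, aF, LinearMap.comp_apply, LinearMap.proj_apply, hgen, sgn]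
      split_ifs with h1 h2
      · exact absurd h1 (this h2)
      all_goals linarith
    · have := hno2 e
      simp only [ofBnd, b, aF, LinearMap.comp_apply, LinearMap.proj_apply, sgn]
      split_ifs with h1 h2
      · exact absurd h1 (this h2)
      all_goals linarith
    · exact Nat.cast_pos.2 hNG
    · rw [hq]
      simp only [bnd_ofBnd, b, c.2, if_false]
      have := sgn_sq c.1
      nlinarith
  · rintro q ⟨h1, h2, h3, h4, h5⟩
    have hq := hΘ q
    rw [hA] at hq
    simp only [Prod.mk.injEq] at hq
    obtain ⟨q1, q2, q3⟩ := hq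
    have hbind : ∀ c, c ∈ Set.range ι → aF C B c (Θ q) = bnd q.1 c := by
      rintro _ ⟨k, rfl⟩
      rw [haι]
      exact congrFun q3 k
    have hfe : Feasible C B q.1 q.2 (fun i => inj C B (Θ q) (Fin.castAdd NL i)) (Θ q) := by
      rw [feas_iff]
      refine ⟨fun _ => q1, fun j => ?_, fun _ => rfl, fun c => ?_⟩
      · rw [← congrFun q2 j, neg_neg]
      · by_cases hc : c ∈ Set.range ι
        · rw [hbind c hc]
        · exact (h5 ⟨c, hc⟩).le
    refine ⟨fun i => (h1 i).le, h2, h3, h4, _, Θ q, ⟨hfe, fun s t hst => ?_⟩, fun c => ⟨?_, hbind c⟩⟩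
    · rw [cost_eq C B hfe, cost_eq C B hst, ← sub_nonneg, ← map_sub]
      have p := (feas_iff ..).1 hst
      have r := (feas_iff ..).1 hfe
      rw [hF]
      · refine Finset.sum_nonneg fun k _ => ?_
        have a1 := p.2.2.2 (ι k)
        rw [← hbind _ ⟨k, rfl⟩, haι] at a1
        rw [map_sub]
        have hs := hsgn k
        rcases mul_self_eq_one_iff.1 (sgn_sq (ι k)) with s | s <;> rw [s] at a1 hs <;> nlinarith
      · simp [p.1 hN, q1]
      · intro j; simp [p.2.1, r.2.1]
    · intro hc
      by_contra hn
      have := h5 ⟨c, hn⟩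
      rw [hc] at this
      exact lt_irrefl _ this

end
end
end DCOPF

theorem exists_good_instance_with_binding_pattern {NG NL E : ℕ} (hNG : 0 < NG) (hNL : 0 < NL) (hE : 0 < E)
    (C : Matrix (Fin (NG + NL)) (Fin E) ℝ) (B : Matrix (Fin E) (Fin E) ℝ)
    (hInc : IsIncidence C) (hConn : ConnectedIncidence C) (hB : PosDiag B)
    (SG : Finset (Fin NG)) (SB : Finset (Fin E))
    (hcard : SG.card + SB.card = NG - 1) (hperp : Perp C B SG SB) :
    ∃ (f : Fin NG → ℝ) (ξ : XiT NG E),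
      f ∈ OmegaF C B ∧ ξ ∈ OmegaXi C B ∧
      closure (interior (OmegaSl C B ξ)) = closure (OmegaSl C B ξ) ∧
      OmegaSl C B ξ ⊆ closure (TOmegaSl C B f ξ) ∧
      ∃ (c : Fin NL → ℝ) (r : ℝ), 0 < r ∧ Metric.ball c r ⊆ TOmegaSl C B f ξ ∧
        ∀ sl ∈ Metric.ball c r, ∀ sg θ, IsOptimal C B f ξ sl sg θ →
          (∀ i : Fin NG, ((i ∈ SG) ↔ (sg i = ξ.1 i ∨ sg i = ξ.2.1 i)) ∧
            ¬(sg i = ξ.1 i ∧ sg i = ξ.2.1 i)) ∧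
          (∀ e : Fin E, ((e ∈ SB) ↔
              (((B * Cᵀ) *ᵥ θ) e = ξ.2.2.1 e ∨ ((B * Cᵀ) *ᵥ θ) e = ξ.2.2.2 e)) ∧
            ¬(((B * Cᵀ) *ᵥ θ) e = ξ.2.2.1 e ∧ ((B * Cᵀ) *ᵥ θ) e = ξ.2.2.2 e)) := by
  classical
  obtain ⟨f, hpos, hf⟩ := DCOPF.exists_f (NG := NG) hConn hB
  obtain ⟨ι, hι, U, hU, ⟨⟨ξ0, sl0⟩, h0⟩, hloc⟩ :=
    DCOPF.local_part hNG hInc hConn hB hNL hcard hperp hf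
  obtain ⟨U1, U2, hU1, hU2, hm1, hm2, hsub⟩ := isOpen_prod_iff.1 hU ξ0 sl0 h0
  obtain ⟨ξ, hξ1, hξ⟩ := DCOPF.exists_xi (B := B) hNG hConn U1 hU1 ⟨ξ0, hm1⟩
  obtain ⟨r, hr, hball⟩ := Metric.isOpen_iff.1 hU2 sl0 hm2
  have key : ∀ sl ∈ Metric.ball sl0 r, _ := fun sl hsl =>
    hloc (ξ, sl) (hsub ⟨hξ1, hball hsl⟩)
  have hOm : Metric.ball sl0 r ⊆ OmegaSl C B ξ := by
    intro sl hsl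
    obtain ⟨_, _, _, h4, sg, θ, h5, _⟩ := key sl hsl
    exact ⟨h4, sg, θ, h5.1⟩
  have hc := key sl0 (Metric.mem_ball_self hr)
  have hlt1 : ∀ i, ξ.2.1 i < ξ.1 i := hc.2.1
  have hlt2 : ∀ e, ξ.2.2.2 e < ξ.2.2.1 e := hc.2.2.1
  have hcl : closure (interior (OmegaSl C B ξ)) = closure (OmegaSl C B ξ) :=
    (DCOPF.convex_OmegaSl ξ).closure_interior_eq_closure_of_nonempty_interior
      ⟨sl0, interior_maximal hOm Metric.isOpen_ball (Metric.mem_ball_self hr)⟩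
  have hbind : ∀ sl ∈ Metric.ball sl0 r, ∀ sg θ, IsOptimal C B f ξ sl sg θ →
      ∀ c, DCOPF.aF C B c θ = DCOPF.bnd ξ c ↔ c ∈ Set.range ι := by
    intro sl hsl sg θ hopt
    obtain ⟨_, _, _, _, sg', θ', h5, h6⟩ := key sl hsl
    obtain ⟨-, rfl⟩ := DCOPF.unique_opt hf hopt h5
    exact h6
  refine ⟨f, ξ, DCOPF.mem_OmegaF hNG hConn hB hpos hf, ⟨hc.1, hlt1, hlt2, sl0,
    hOm (Metric.mem_ball_self hr)⟩, hcl, DCOPF.dense_T hNG hf hξ hcl, sl0, r, hr, ?_, ?_⟩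
  · intro sl hsl
    refine ⟨hOm hsl, fun sg θ hopt => ?_⟩
    rw [DCOPF.count_eq C B hopt.1]
    have : DCOPF.bind C B ξ θ = Finset.univ.image ι := by
      ext c
      rw [DCOPF.mem_bind, hbind sl hsl sg θ hopt c]
      simp only [Set.mem_range, Finset.mem_image, Finset.mem_univ, true_and]
    rw [this, Finset.card_image_of_injective _ fun k k' h => DCOPF.und_inj hι (congrArg _ h)]
    simpa using hcard
  · intro sl hsl sg θ hopt
    have hb := hbind sl hsl sg θ hopt
    have hsg := ((DCOPF.feas_iff ..).1 hopt.1).2.2.1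
    refine ⟨fun i => ⟨?_, fun h => (hlt1 i).ne (h.2.symm.trans h.1)⟩,
      fun e => ⟨?_, fun h => (hlt2 e).ne (h.2.symm.trans h.1)⟩⟩
    · have b1 : sg i = ξ.1 i ↔ Sum.inl i ∈ Set.range ι := by rw [← hb, hsg]; rfl
      have b2 : sg i = ξ.2.1 i ↔ Sum.inr (Sum.inl i) ∈ Set.range ι := by rw [← hb, hsg]; rfl
      rw [b1, b2]
      constructor
      · intro hi
        exact (hι (Sum.inl ⟨i, hi⟩)).imp (fun h => ⟨_, h⟩) (fun h => ⟨_, h⟩)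
      · have aux : ∀ k, DCOPF.und (ι k) = Sum.inl i → i ∈ SG := by
          intro k hk
          rw [DCOPF.und_eq hι] at hk
          rcases k with k | k
          · exact Sum.inl.inj hk ▸ k.2
          · simp at hk
        rintro (⟨k, hk⟩ | ⟨k, hk⟩) <;> exact aux k (by rw [hk]; rfl)
    · have b1 : ((B * Cᵀ) *ᵥ θ) e = ξ.2.2.1 e ↔ Sum.inr (Sum.inr (Sum.inl e)) ∈ Set.range ι := by
        rw [← hb]; rfl
      have b2 : ((B * Cᵀ) *ᵥ θ) e = ξ.2.2.2 e ↔ Sum.inr (Sum.inr (Sum.inr e)) ∈ Set.range ι := by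
        rw [← hb]; rfl
      rw [b1, b2]
      constructor
      · intro he
        exact (hι (Sum.inr ⟨e, he⟩)).imp (fun h => ⟨_, h⟩) (fun h => ⟨_, h⟩)
      · have aux : ∀ k, DCOPF.und (ι k) = Sum.inr e → e ∈ SB := by
          intro k hk
          rw [DCOPF.und_eq hι] at hk
          rcases k with k | k
          · simp at hk
          · exact Sum.inr.inj hk ▸ k.2
        rintro (⟨k, hk⟩ | ⟨k, hk⟩) <;> exact aux k (by rw [hk]; rfl)

end
end

section
/- Identifying ξ = (s̄, s̲, p̄, p̲) with a vector in ℝ^{2N_G+2E}, the set Ω_ξ satisfies: the closure of the interior of Ω_ξ equals the closure of Ω_ξ (closure and interior taken in ℝ^{2N_G+2E}). -/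
open Matrix

noncomputable section

theorem lap_solve {n E : ℕ} (hn : 0 < n) (C : Matrix (Fin n) (Fin E) ℝ)
    (B : Matrix (Fin E) (Fin E) ℝ)
    (hConn : ∀ x : Fin n → ℝ, Cᵀ *ᵥ x = 0 ↔ ∃ c : ℝ, x = fun _ => c) (hB : PosDiag B)
    (d : Fin n → ℝ) (hd : ∑ i, d i = 0) :
    ∃ φ : Fin n → ℝ, φ ⟨0, hn⟩ = 0 ∧ (C * B * Cᵀ) *ᵥ φ = d := by
  have h1 : ∀ c : ℝ, Cᵀ *ᵥ (fun _ => c) = 0 := fun c => (hConn _).2 ⟨c, rfl⟩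
  have hmul : ∀ x, (C * B * Cᵀ) *ᵥ x = C *ᵥ (B *ᵥ (Cᵀ *ᵥ x)) := by
    intro x; simp [Matrix.mulVec_mulVec, Matrix.mul_assoc]
  have hdot : ∀ y x : Fin n → ℝ, y ⬝ᵥ ((C * B * Cᵀ) *ᵥ x) = (Cᵀ *ᵥ y) ⬝ᵥ (B *ᵥ (Cᵀ *ᵥ x)) := by
    intro y x
    rw [hmul, Matrix.dotProduct_mulVec, Matrix.mulVec_transpose C y]
  have hsum : ∀ x, ∑ i, ((C * B * Cᵀ) *ᵥ x) i = 0 := by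
    intro x
    have := hdot (fun _ => 1) x
    rw [h1] at this
    simpa [dotProduct] using this
  have hBv : ∀ z e, (B *ᵥ z) e = B e e * z e := by
    intro z e
    rw [Matrix.mulVec, dotProduct, Finset.sum_eq_single e]
    · intro b _ hb
      rw [hB.2 e b hb.symm, zero_mul]
    · simp
  have hn' : (n : ℝ) ≠ 0 := by positivity
  let L : (Fin n → ℝ) →ₗ[ℝ] (Fin n → ℝ) :=
    { toFun := fun x i => ((C * B * Cᵀ) *ᵥ x) i + ∑ j, x j
      map_add' := by
        intro x y; ext i
        simp only [Matrix.mulVec_add, Pi.add_apply, Finset.sum_add_distrib]; ring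
      map_smul' := by
        intro c x; ext i
        simp only [Matrix.mulVec_smul, Pi.smul_apply, smul_eq_mul, RingHom.id_apply,
          ← Finset.mul_sum]; ring }
  have hL : ∀ x i, L x i = ((C * B * Cᵀ) *ᵥ x) i + ∑ j, x j := fun _ _ => rfl
  have hLs : ∀ x, ∑ i, L x i = n * ∑ j, x j := by
    intro x
    simp only [hL, Finset.sum_add_distrib, hsum]
    simp
  have key : ∀ x d, ∑ i, d i = 0 → L x = d → ∑ j, x j = 0 ∧ (C * B * Cᵀ) *ᵥ x = d := by
    intro x d hd h
    have h0 : ∑ j, x j = 0 := by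
      have := hLs x
      rw [h, hd] at this
      rcases mul_eq_zero.1 this.symm with h | h
      · exact absurd h hn'
      · exact h
    refine ⟨h0, ?_⟩
    ext i
    rw [← h, hL, h0, add_zero]
  have hinj : Function.Injective L := by
    rw [injective_iff_map_eq_zero]
    intro x hx
    obtain ⟨h0, hA⟩ := key x 0 (by simp) hx
    have h2 := hdot x x
    rw [hA, dotProduct_zero, dotProduct] at h2
    have h3 := (Finset.sum_eq_zero_iff_of_nonneg (fun e _ => by
      rw [hBv]; have := hB.1 e; nlinarith [mul_nonneg this.le (mul_self_nonneg ((Cᵀ *ᵥ x) e))])).1 h2.symm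
    have h4 : Cᵀ *ᵥ x = 0 := by
      ext e
      have := h3 e (Finset.mem_univ _)
      rw [hBv] at this
      have hb := (hB.1 e).ne'
      simpa [hb] using this
    obtain ⟨c, rfl⟩ := (hConn x).1 h4
    have : c = 0 := by simpa [hn.ne'] using h0
    ext i; simp [this]
  obtain ⟨x, hx⟩ := LinearMap.surjective_of_injective hinj d
  obtain ⟨_, hA⟩ := key x d hd hx
  refine ⟨x - fun _ => x ⟨0, hn⟩, by simp, ?_⟩
  rw [Matrix.mulVec_sub, hA, hmul (fun _ => _), h1]
  simp

theorem omegaXi_closure_interior {NG NL E : ℕ} (hNG : 0 < NG) (hNL : 0 < NL) (hE : 0 < E)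
    (C : Matrix (Fin (NG + NL)) (Fin E) ℝ) (B : Matrix (Fin E) (Fin E) ℝ)
    (hInc : IsIncidence C) (hConn : ConnectedIncidence C) (hB : PosDiag B) :
    closure (interior (OmegaXi C B)) = closure (OmegaXi C B) := by
  apply subset_antisymm (closure_mono interior_subset)
  apply closure_minimal _ isClosed_closure
  rintro ⟨su, sd, pu, pd⟩ ⟨hs0, hs, hp, sl, hsl, sg, θ, hθ0, hA, hg, hf⟩
  dsimp only at hs0 hs hp hg hf
  have hNL' : (NL : ℝ) ≠ 0 := by positivity
  obtain ⟨φ, hφ0, hφ⟩ := lap_solve (by omega) C B hConn hB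
    (Fin.append (fun _ : Fin NG => (1 : ℝ)) (fun _ : Fin NL => -((NG : ℝ) / NL)))
    (by rw [Fin.sum_univ_add]; simp; field_simp; ring)
  set q := (B * Cᵀ) *ᵥ φ with hq
  let ξ : ℝ → XiT NG E := fun t =>
    (fun i => su i + 3 * t, fun i => sd i + t,
      fun e => pu e + t * (2 * |q e| + 1), fun e => pd e - t * (2 * |q e| + 1))
  have hcont : Continuous ξ := by fun_prop
  have hlim : Filter.Tendsto ξ (nhdsWithin 0 (Set.Ioi 0)) (nhds (su, sd, pu, pd)) := by
    have := hcont.tendsto 0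
    have h0 : ξ 0 = (su, sd, pu, pd) := by simp [ξ]
    rw [h0] at this
    exact this.mono_left nhdsWithin_le_nhds
  refine mem_closure_of_tendsto hlim ?_
  filter_upwards [self_mem_nhdsWithin] with t ht
  have ht : 0 < t := ht
  let q' := (B * Cᵀ) *ᵥ (θ + (2 * t) • φ)
  have hq' : ∀ e, q' e = ((B * Cᵀ) *ᵥ θ) e + 2 * t * q e := by
    intro e; simp [q', q, Matrix.mulVec_add, Matrix.mulVec_smul]
  let W : Set (XiT NG E) := {z | (∀ i, 0 < z.2.1 i) ∧ (∀ i, z.2.1 i < sg i + 2 * t) ∧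
    (∀ i, sg i + 2 * t < z.1 i) ∧ (∀ e, z.2.2.2 e < q' e) ∧ (∀ e, q' e < z.2.2.1 e)}
  have hW : IsOpen W := by
    simp only [W, Set.ofPred_and, Set.ofPred_forall]
    refine IsOpen.inter ?_ (IsOpen.inter ?_ (IsOpen.inter ?_ (IsOpen.inter ?_ ?_))) <;>
    · refine isOpen_iInter_of_finite fun i => ?_
      exact isOpen_lt (by fun_prop) (by fun_prop)
  refine mem_interior.2 ⟨W, ?_, hW, ?_⟩
  · rintro z ⟨z1, z2, z3, z4, z5⟩
    refine ⟨fun i => (z1 i).le, fun i => (z2 i).trans (z3 i), fun e => (z4 e).trans (z5 e),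
      fun j => sl j + 2 * t * (NG / NL), ?_, fun i => sg i + 2 * t, θ + (2 * t) • φ, ?_, ?_,
      fun i => ⟨(z2 i).le, (z3 i).le⟩, fun e => ⟨(z4 e).le, (z5 e).le⟩⟩
    · intro j
      have := hsl j
      positivity
    · intro h
      simp [hθ0 h, hφ0]
    · rw [Matrix.mulVec_add, Matrix.mulVec_smul, hA, hφ]
      ext i
      refine Fin.addCases (fun i => ?_) (fun i => ?_) i
      · simp
      · simp; ring
  · refine ⟨fun i => ?_, fun i => ?_, fun i => ?_, fun e => ?_, fun e => ?_⟩ <;>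
      simp only [ξ]
    · linarith [hs0 i]
    · linarith [(hg i).1]
    · linarith [(hg i).2]
    · rw [hq']
      nlinarith [(hf e).1, mul_le_mul_of_nonneg_left (neg_abs_le (q e)) ht.le]
    · rw [hq']
      nlinarith [(hf e).2, mul_le_mul_of_nonneg_left (le_abs_self (q e)) ht.le]

end
end

section
/- The set {f ∈ ℝ^{N_G} : f ≥ 0 componentwise} \ Ω_f is contained in a finite union of linear subspaces of ℝ^{N_G}, each of dimension at most N_G − 1. -/
open Matrix

noncomputable section

/-- Perturbation directions (in the angles) that keep the constraints in `SG`, `SE` binding. -/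
def DirSub {NG NL E : ℕ} (C : Matrix (Fin (NG + NL)) (Fin E) ℝ)
    (B : Matrix (Fin E) (Fin E) ℝ) (SG : Finset (Fin NG)) (SE : Finset (Fin E))
    (θ : Fin (NG + NL) → ℝ) : Prop :=
  (∀ h : 0 < NG + NL, θ ⟨0, h⟩ = 0) ∧
  (∀ j, ((C * B * Cᵀ) *ᵥ θ) (Fin.natAdd NG j) = 0) ∧
  (∀ i ∈ SG, ((C * B * Cᵀ) *ᵥ θ) (Fin.castAdd NL i) = 0) ∧
  (∀ e ∈ SE, ((B * Cᵀ) *ᵥ θ) e = 0)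

/-- Generation part of `L θ`. -/
def genPart {NG NL E : ℕ} (C : Matrix (Fin (NG + NL)) (Fin E) ℝ)
    (B : Matrix (Fin E) (Fin E) ℝ) (θ : Fin (NG + NL) → ℝ) : Fin NG → ℝ :=
  fun i => ((C * B * Cᵀ) *ᵥ θ) (Fin.castAdd NL i)

/-- Costs orthogonal to all directions. -/
def orthSub {NG NL E : ℕ} (C : Matrix (Fin (NG + NL)) (Fin E) ℝ)
    (B : Matrix (Fin E) (Fin E) ℝ) (SG : Finset (Fin NG)) (SE : Finset (Fin E)) :
    Submodule ℝ (Fin NG → ℝ) where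
  carrier := {f | ∀ θ, DirSub C B SG SE θ → f ⬝ᵥ genPart C B θ = 0}
  add_mem' := by
    intro a b ha hb θ hθ
    rw [add_dotProduct, ha θ hθ, hb θ hθ, add_zero]
  zero_mem' := by
    intro θ _
    exact zero_dotProduct _
  smul_mem' := by
    intro c a ha θ hθ
    rw [smul_dotProduct, ha θ hθ, smul_zero]

theorem lap_ker {NG NL E : ℕ} (C : Matrix (Fin (NG + NL)) (Fin E) ℝ)
    (B : Matrix (Fin E) (Fin E) ℝ) (hConn : ConnectedIncidence C) (hB : PosDiag B)
    (hN : 0 < NG + NL) (θ : Fin (NG + NL) → ℝ) (h0 : θ ⟨0, hN⟩ = 0)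
    (h : (C * B * Cᵀ) *ᵥ θ = 0) : θ = 0 := by
  have hBd : ∀ y : Fin E → ℝ, ∀ e, (B *ᵥ y) e = B e e * y e := by
    intro y e
    rw [mulVec, dotProduct, Finset.sum_eq_single e]
    · intro b _ hb
      rw [hB.2 e b hb.symm, zero_mul]
    · simp
  have h1 : θ ⬝ᵥ ((C * B * Cᵀ) *ᵥ θ) = ∑ e, B e e * (Cᵀ *ᵥ θ) e ^ 2 := by
    rw [← mulVec_mulVec, ← mulVec_mulVec, dotProduct_mulVec, ← mulVec_transpose, dotProduct]
    refine Finset.sum_congr rfl fun e _ => ?_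
    rw [hBd]; ring
  rw [h, dotProduct_zero] at h1
  have h2 := (Finset.sum_eq_zero_iff_of_nonneg
    (fun e _ => mul_nonneg (hB.1 e).le (sq_nonneg ((Cᵀ *ᵥ θ) e)))).1 h1.symm
  have h3 : Cᵀ *ᵥ θ = 0 := by
    funext e
    have := h2 e (Finset.mem_univ e)
    rcases mul_eq_zero.1 this with h | h
    · exact absurd h (hB.1 e).ne'
    · simpa using h
  obtain ⟨c, rfl⟩ := (hConn θ).1 h3
  funext i
  exact h0

theorem genPart_ne {NG NL E : ℕ} (C : Matrix (Fin (NG + NL)) (Fin E) ℝ)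
    (B : Matrix (Fin E) (Fin E) ℝ) (hConn : ConnectedIncidence C) (hB : PosDiag B)
    (hN : 0 < NG + NL) (SG : Finset (Fin NG)) (SE : Finset (Fin E))
    (θ : Fin (NG + NL) → ℝ) (hd : DirSub C B SG SE θ) (hθ : θ ≠ 0) : genPart C B θ ≠ 0 := by
  intro h
  apply hθ
  refine lap_ker C B hConn hB hN θ (hd.1 hN) ?_
  funext i
  refine Fin.addCases (fun i => ?_) (fun j => ?_) i
  · exact congrFun h i
  · exact hd.2.1 j

theorem orthSub_finrank {NG NL E : ℕ} (C : Matrix (Fin (NG + NL)) (Fin E) ℝ)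
    (B : Matrix (Fin E) (Fin E) ℝ) (hConn : ConnectedIncidence C) (hB : PosDiag B)
    (hN : 0 < NG + NL) (SG : Finset (Fin NG)) (SE : Finset (Fin E))
    (θ : Fin (NG + NL) → ℝ) (hd : DirSub C B SG SE θ) (hθ : θ ≠ 0) :
    Module.finrank ℝ (orthSub C B SG SE) ≤ NG - 1 := by
  have hne := genPart_ne C B hConn hB hN SG SE θ hd hθ
  have hlt : Module.finrank ℝ (orthSub C B SG SE) < Module.finrank ℝ (Fin NG → ℝ) := by
    apply Submodule.finrank_lt
    intro htop
    have hm : genPart C B θ ∈ orthSub C B SG SE := by rw [htop]; trivial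
    exact hne (dotProduct_self_eq_zero.1 (hm θ hd))
  rw [Module.finrank_fin_fun] at hlt
  omega

theorem exists_opt {NG NL E : ℕ} (C : Matrix (Fin (NG + NL)) (Fin E) ℝ)
    (B : Matrix (Fin E) (Fin E) ℝ) (hConn : ConnectedIncidence C) (hB : PosDiag B)
    (hN : 0 < NG + NL) (f : Fin NG → ℝ) (ξ : XiT NG E) (sl : Fin NL → ℝ)
    (hne : ∃ sg θ, Feasible C B ξ sl sg θ) : ∃ sg θ, IsOptimal C B f ξ sl sg θ := by
  let T : (Fin (NG + NL) → ℝ) →ₗ[ℝ] ℝ × (Fin (NG + NL) → ℝ) :=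
    (LinearMap.proj ⟨0, hN⟩).prod (C * B * Cᵀ).mulVecLin
  have hT : ∀ θ, T θ = (θ ⟨0, hN⟩, (C * B * Cᵀ) *ᵥ θ) := fun θ => rfl
  have hker : LinearMap.ker T = ⊥ := by
    rw [LinearMap.ker_eq_bot']
    intro θ h
    rw [hT] at h
    exact lap_ker C B hConn hB hN θ (congrArg Prod.fst h) (congrArg Prod.snd h)
  have hemb := LinearMap.isClosedEmbedding_of_injective hker
  let K : Set (ℝ × (Fin (NG + NL) → ℝ)) :=
    Set.Icc (0, Fin.append ξ.2.1 (fun j => -(sl j))) (0, Fin.append ξ.1 (fun j => -(sl j)))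
  have hK : IsCompact (T ⁻¹' K) := hemb.isCompact_preimage isCompact_Icc
  let F : Set (Fin E → ℝ) := Set.Icc ξ.2.2.2 ξ.2.2.1
  have hF : IsClosed ((fun θ => (B * Cᵀ) *ᵥ θ) ⁻¹' F) :=
    isClosed_Icc.preimage (by fun_prop)
  let S := T ⁻¹' K ∩ (fun θ => (B * Cᵀ) *ᵥ θ) ⁻¹' F
  have hS : IsCompact S := hK.inter_right hF
  have hfeas : ∀ sg θ, Feasible C B ξ sl sg θ → θ ∈ S ∧ sg = genPart C B θ := by
    intro sg θ h
    obtain ⟨h0, h1, h2, h3⟩ := h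
    refine ⟨⟨?_, ⟨fun e => (h3 e).1, fun e => (h3 e).2⟩⟩, ?_⟩
    · show T θ ∈ K
      rw [hT, h0 hN, h1]
      refine ⟨⟨le_rfl, fun i => ?_⟩, ⟨le_rfl, fun i => ?_⟩⟩
      · refine Fin.addCases (fun i => ?_) (fun j => ?_) i
        · simpa using (h2 i).1
        · simp
      · refine Fin.addCases (fun i => ?_) (fun j => ?_) i
        · simpa using (h2 i).2
        · simp
    · funext i
      simp [genPart, h1]
  have hfeas' : ∀ θ ∈ S, Feasible C B ξ sl (genPart C B θ) θ := by
    rintro θ ⟨⟨⟨ha, hb⟩, ⟨hc, hd⟩⟩, he, hf⟩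
    refine ⟨fun _ => le_antisymm hc ha, ?_, fun i => ⟨?_, ?_⟩, fun e => ⟨he e, hf e⟩⟩
    · funext i
      refine Fin.addCases (fun i => ?_) (fun j => ?_) i
      · simp [genPart]
      · have h1 := hb (Fin.natAdd NG j)
        have h2 := hd (Fin.natAdd NG j)
        simp only [hT, Fin.append_right] at h1 h2
        rw [Fin.append_right]
        exact le_antisymm h2 h1
    · have h1 := hb (Fin.castAdd NL i)
      simp only [hT, Fin.append_left] at h1
      exact h1
    · have h1 := hd (Fin.castAdd NL i)
      simp only [hT, Fin.append_left] at h1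
      exact h1
  obtain ⟨sg0, θ0, h00⟩ := hne
  have hcont : Continuous (fun θ => f ⬝ᵥ genPart C B θ) := by
    unfold genPart dotProduct
    refine continuous_finsetSum _ fun i _ => continuous_const.mul ?_
    have : Continuous (fun θ : Fin (NG + NL) → ℝ => (C * B * Cᵀ) *ᵥ θ) := by fun_prop
    exact (continuous_apply _).comp this
  obtain ⟨θ, hθ, hmin⟩ := hS.exists_isMinOn ⟨θ0, (hfeas _ _ h00).1⟩ hcont.continuousOn
  refine ⟨genPart C B θ, θ, hfeas' θ hθ, fun sg' θ' h' => ?_⟩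
  obtain ⟨ha, rfl⟩ := hfeas _ _ h'
  exact hmin ha

theorem eventually_between (lo hi x d : ℝ) (h1 : lo ≤ x) (h2 : x ≤ hi)
    (h : (x = lo ∨ x = hi) → d = 0) :
    ∀ᶠ t in nhds (0 : ℝ), lo ≤ x + t * d ∧ x + t * d ≤ hi := by
  by_cases ha : x = lo ∨ x = hi
  · rw [h ha]
    simp [h1, h2]
  · push Not at ha
    have hc : Filter.Tendsto (fun t : ℝ => x + t * d) (nhds 0) (nhds x) := by
      have : Continuous (fun t : ℝ => x + t * d) := by fun_prop
      simpa using this.tendsto 0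
    filter_upwards [hc.eventually_const_lt (lt_of_le_of_ne h1 ha.1.symm),
      hc.eventually_lt_const (lt_of_le_of_ne h2 ha.2)] with t h3 h4
    exact ⟨h3.le, h4.le⟩

theorem feas_append {NG NL E : ℕ} {C : Matrix (Fin (NG + NL)) (Fin E) ℝ}
    {B : Matrix (Fin E) (Fin E) ℝ} {ξ : XiT NG E} {sl : Fin NL → ℝ}
    {sg θ} (h : Feasible C B ξ sl sg θ) : sg = genPart C B θ := by
  funext i
  simp [genPart, h.2.1]

/-- At an optimal point `x`, the cost is orthogonal to all directions preserving the binding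
constraints. -/
theorem opt_orth {NG NL E : ℕ} (C : Matrix (Fin (NG + NL)) (Fin E) ℝ)
    (B : Matrix (Fin E) (Fin E) ℝ) (f : Fin NG → ℝ) (ξ : XiT NG E) (sl : Fin NL → ℝ)
    (sg : Fin NG → ℝ) (θ : Fin (NG + NL) → ℝ) (h : IsOptimal C B f ξ sl sg θ)
    (SG : Finset (Fin NG)) (SE : Finset (Fin E))
    (hSG : ∀ i, (sg i = ξ.2.1 i ∨ sg i = ξ.1 i) → i ∈ SG)
    (hSE : ∀ e, (((B * Cᵀ) *ᵥ θ) e = ξ.2.2.2 e ∨ ((B * Cᵀ) *ᵥ θ) e = ξ.2.2.1 e) → e ∈ SE) :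
    f ∈ orthSub C B SG SE := by
  intro d hd
  obtain ⟨⟨h0, h1, h2, h3⟩, hopt⟩ := h
  have e1 : ∀ᶠ t in nhds (0 : ℝ), ∀ i, ξ.2.1 i ≤ sg i + t * genPart C B d i ∧
      sg i + t * genPart C B d i ≤ ξ.1 i :=
    Filter.eventually_all.2 fun i => eventually_between _ _ _ _ (h2 i).1 (h2 i).2
      fun hh => hd.2.2.1 i (hSG i hh)
  have e2 : ∀ᶠ t in nhds (0 : ℝ), ∀ e,
      ξ.2.2.2 e ≤ ((B * Cᵀ) *ᵥ θ) e + t * ((B * Cᵀ) *ᵥ d) e ∧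
      ((B * Cᵀ) *ᵥ θ) e + t * ((B * Cᵀ) *ᵥ d) e ≤ ξ.2.2.1 e :=
    Filter.eventually_all.2 fun e => eventually_between _ _ _ _ (h3 e).1 (h3 e).2
      fun hh => hd.2.2.2 e (hSE e hh)
  have e3 : ∀ᶠ t in nhds (0 : ℝ), 0 ≤ t * (f ⬝ᵥ genPart C B d) := by
    filter_upwards [e1, e2] with t h4 h5
    have hf : Feasible C B ξ sl (sg + t • genPart C B d) (θ + t • d) := by
      refine ⟨fun hN => ?_, ?_, fun i => ?_, fun e => ?_⟩
      · simp [h0 hN, hd.1 hN]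
      · rw [mulVec_add, mulVec_smul, h1]
        funext i
        refine Fin.addCases (fun i => ?_) (fun j => ?_) i
        · simp [genPart]
        · simp [hd.2.1 j]
      · simpa using h4 i
      · simpa [mulVec_add, mulVec_smul] using h5 e
    have := hopt _ _ hf
    rw [dotProduct_add, dotProduct_smul, smul_eq_mul] at this
    linarith
  obtain ⟨ε, hε, h6⟩ := Metric.eventually_nhds_iff.1 e3
  have h7 : 0 ≤ (ε / 2) * (f ⬝ᵥ genPart C B d) := h6 (by
    rw [Real.dist_eq, sub_zero, abs_of_pos (by linarith)]; linarith)
  have h8 : 0 ≤ (-(ε / 2)) * (f ⬝ᵥ genPart C B d) := h6 (by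
    rw [Real.dist_eq, sub_zero, abs_neg, abs_of_pos (by linarith)]; linarith)
  have h9 : (ε / 2) * (f ⬝ᵥ genPart C B d) = 0 := by linarith
  rcases mul_eq_zero.1 h9 with h | h
  · linarith
  · exact h

theorem feas_mid {NG NL E : ℕ} {C : Matrix (Fin (NG + NL)) (Fin E) ℝ}
    {B : Matrix (Fin E) (Fin E) ℝ} {ξ : XiT NG E} {sl : Fin NL → ℝ}
    {sg θ sg' θ'} (h : Feasible C B ξ sl sg θ) (h' : Feasible C B ξ sl sg' θ') :
    Feasible C B ξ sl ((1 / 2 : ℝ) • (sg + sg')) ((1 / 2 : ℝ) • (θ + θ')) := by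
  obtain ⟨h0, h1, h2, h3⟩ := h
  obtain ⟨k0, k1, k2, k3⟩ := h'
  refine ⟨fun hN => ?_, ?_, fun i => ?_, fun e => ?_⟩
  · simp [h0 hN, k0 hN]
  · rw [mulVec_smul, mulVec_add, h1, k1]
    funext i
    refine Fin.addCases (fun i => ?_) (fun j => ?_) i
    · simp; ring
    · simp; ring
  · have := h2 i
    have := k2 i
    simp only [Pi.smul_apply, Pi.add_apply, smul_eq_mul]
    constructor <;> linarith
  · have := h3 e
    have := k3 e
    simp only [mulVec_smul, mulVec_add, Pi.smul_apply, Pi.add_apply, smul_eq_mul]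
    constructor <;> linarith

theorem nonunique_orth {NG NL E : ℕ} (C : Matrix (Fin (NG + NL)) (Fin E) ℝ)
    (B : Matrix (Fin E) (Fin E) ℝ) (f : Fin NG → ℝ) (ξ : XiT NG E) (sl : Fin NL → ℝ)
    (sg sg' : Fin NG → ℝ) (θ θ' : Fin (NG + NL) → ℝ) (h : IsOptimal C B f ξ sl sg θ)
    (h' : IsOptimal C B f ξ sl sg' θ') (hne : θ ≠ θ') :
    ∃ SG SE, (∃ d, DirSub C B SG SE d ∧ d ≠ 0) ∧ f ∈ orthSub C B SG SE := by
  classical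
  have hmid : IsOptimal C B f ξ sl ((1 / 2 : ℝ) • (sg + sg')) ((1 / 2 : ℝ) • (θ + θ')) := by
    refine ⟨feas_mid h.1 h'.1, fun s t hst => ?_⟩
    have a := h.2 s t hst
    have b := h'.2 s t hst
    rw [dotProduct_smul, dotProduct_add, smul_eq_mul]
    linarith
  set sm := (1 / 2 : ℝ) • (sg + sg') with hsm
  set tm := (1 / 2 : ℝ) • (θ + θ') with htm
  refine ⟨Finset.univ.filter fun i => sm i = ξ.2.1 i ∨ sm i = ξ.1 i,
    Finset.univ.filter fun e => ((B * Cᵀ) *ᵥ tm) e = ξ.2.2.2 e ∨ ((B * Cᵀ) *ᵥ tm) e = ξ.2.2.1 e,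
    ⟨θ - θ', ⟨fun hN => ?_, fun j => ?_, fun i hi => ?_, fun e he => ?_⟩, sub_ne_zero.2 hne⟩, ?_⟩
  · simp [h.1.1 hN, h'.1.1 hN]
  · simp [mulVec_sub, h.1.2.1, h'.1.2.1]
  · have a := h.1.2.2.1 i
    have b := h'.1.2.2.1 i
    have hi2 := (Finset.mem_filter.1 hi).2
    simp only [hsm, Pi.smul_apply, Pi.add_apply, smul_eq_mul] at hi2
    simp only [mulVec_sub, h.1.2.1, h'.1.2.1, Pi.sub_apply, Fin.append_left]
    rcases hi2 with hi2 | hi2 <;> linarith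
  · have a := h.1.2.2.2 e
    have b := h'.1.2.2.2 e
    have hi2 := (Finset.mem_filter.1 he).2
    simp only [htm, mulVec_smul, mulVec_add, Pi.smul_apply, Pi.add_apply, smul_eq_mul] at hi2
    simp only [mulVec_sub, Pi.sub_apply]
    rcases hi2 with hi2 | hi2 <;> linarith
  · exact opt_orth C B f ξ sl sm tm hmid _ _
      (fun i hi => Finset.mem_filter.2 ⟨Finset.mem_univ _, hi⟩)
      (fun i hi => Finset.mem_filter.2 ⟨Finset.mem_univ _, hi⟩)

/-- Dimension count: few constraints leave a nonzero direction. -/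
theorem exists_dir {NG NL E : ℕ} (C : Matrix (Fin (NG + NL)) (Fin E) ℝ)
    (B : Matrix (Fin E) (Fin E) ℝ) (hN : 0 < NG + NL)
    (SG : Finset (Fin NG)) (SE : Finset (Fin E)) (hc : SG.card + SE.card + 1 < NG) :
    ∃ d, DirSub C B SG SE d ∧ d ≠ 0 := by
  let T : (Fin (NG + NL) → ℝ) →ₗ[ℝ] ℝ × (Fin NL → ℝ) × (SG → ℝ) × (SE → ℝ) :=
    (LinearMap.proj ⟨0, hN⟩).prod
      ((LinearMap.pi fun j => (LinearMap.proj (Fin.natAdd NG j)).comp (C * B * Cᵀ).mulVecLin).prod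
      ((LinearMap.pi fun i : SG =>
        (LinearMap.proj (Fin.castAdd NL i.1)).comp (C * B * Cᵀ).mulVecLin).prod
      (LinearMap.pi fun e : SE => (LinearMap.proj e.1).comp (B * Cᵀ).mulVecLin)))
  have hker : LinearMap.ker T ≠ ⊥ := by
    apply LinearMap.ker_ne_bot_of_finrank_lt
    simp only [Module.finrank_prod, Module.finrank_fintype_fun_eq_card, Module.finrank_self,
      Fintype.card_coe, Fintype.card_fin]
    omega
  obtain ⟨d, hd, hd0⟩ := Submodule.exists_mem_ne_zero_of_ne_bot hker
  refine ⟨d, ?_, hd0⟩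
  rw [LinearMap.mem_ker] at hd
  refine ⟨fun _ => congrArg Prod.fst hd, fun j => ?_, fun i hi => ?_, fun e he => ?_⟩
  · exact congrFun (congrArg (fun x => x.2.1) hd) j
  · exact congrFun (congrArg (fun x => x.2.2.1) hd) ⟨i, hi⟩
  · exact congrFun (congrArg (fun x => x.2.2.2) hd) ⟨e, he⟩

theorem kkt_orth {NG NL E : ℕ} (C : Matrix (Fin (NG + NL)) (Fin E) ℝ)
    (B : Matrix (Fin E) (Fin E) ℝ) (hN : 0 < NG + NL) (hB : PosDiag B) (f : Fin NG → ℝ)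
    (ξ : XiT NG E) (sl : Fin NL → ℝ)
    (sg θ τ μp μm lp lm) (h : IsKKT C B f ξ sl sg θ τ μp μm lp lm)
    (SG : Finset (Fin NG)) (SE : Finset (Fin E))
    (hSG : ∀ i, (lp i ≠ 0 ∨ lm i ≠ 0) → i ∈ SG) (hSE : ∀ e, (μp e ≠ 0 ∨ μm e ≠ 0) → e ∈ SE) :
    f ∈ orthSub C B SG SE := by
  intro d hd
  obtain ⟨-, hst, hfe, -⟩ := h
  have hBt : Bᵀ = B := by
    ext i j
    rw [transpose_apply]
    by_cases hij : i = j
    · rw [hij]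
    · rw [hB.2 i j hij, hB.2 j i (Ne.symm hij)]
  -- pair the stationarity condition with `d`
  have h1 : d ⬝ᵥ ((Mmat C B)ᵀ *ᵥ τ) + d ⬝ᵥ ((C * B) *ᵥ (μp - μm)) = 0 := by
    rw [← dotProduct_add, hst, dotProduct_zero]
  have h2 : d ⬝ᵥ ((C * B) *ᵥ (μp - μm)) = 0 := by
    rw [dotProduct_mulVec, ← mulVec_transpose, transpose_mul, hBt, dotProduct]
    refine Finset.sum_eq_zero fun e _ => ?_
    by_cases he : μp e ≠ 0 ∨ μm e ≠ 0
    · rw [hd.2.2.2 e (hSE e he), zero_mul]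
    · push Not at he
      simp [he.1, he.2]
  have h3 : d ⬝ᵥ ((Mmat C B)ᵀ *ᵥ τ) =
      ∑ i : Fin NG, genPart C B d i * τ (Fin.castLE (by omega) i) := by
    rw [dotProduct_mulVec, ← mulVec_transpose, transpose_transpose, dotProduct,
      Fin.sum_univ_castSucc, Fin.sum_univ_add]
    have hrow : ∀ i : Fin (NG + NL), ((Mmat C B) *ᵥ d) i.castSucc = ((C * B * Cᵀ) *ᵥ d) i := by
      intro i
      simp [mulVec, dotProduct, Mmat]
    have hlast : ((Mmat C B) *ᵥ d) (Fin.last _) = 0 := by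
      rw [mulVec, dotProduct]
      refine Finset.sum_eq_zero fun j _ => ?_
      by_cases hj : (j : ℕ) = 0
      · have : j = ⟨0, hN⟩ := Fin.ext hj
        rw [this, hd.1 hN, mul_zero]
      · simp [Mmat, hj]
    simp only [hrow, hlast, hd.2.1, zero_mul, Finset.sum_const_zero, add_zero]
    rfl
  have h4 : f ⬝ᵥ genPart C B d =
      ∑ i : Fin NG, genPart C B d i * τ (Fin.castLE (by omega) i) := by
    rw [dotProduct]
    refine Finset.sum_congr rfl fun i _ => ?_
    by_cases hi : lp i ≠ 0 ∨ lm i ≠ 0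
    · have : genPart C B d i = 0 := hd.2.2.1 i (hSG i hi)
      rw [this]; ring
    · push Not at hi
      have := hfe i
      rw [hi.1, hi.2] at this
      have : f i = τ (Fin.castLE (by omega) i) := by linarith
      rw [this, mul_comm]
  rw [h4, ← h3]
  linarith

theorem card_support_le {n : ℕ} (a b : Fin n → ℝ) :
    ({i | a i ≠ 0 ∨ b i ≠ 0} : Set (Fin n)).toFinite.toFinset.card ≤ nnz a + nnz b := by
  rw [← Set.ncard_eq_toFinset_card]
  exact Set.ncard_union_le {i | a i ≠ 0} {i | b i ≠ 0}

theorem omegaF_complement_covered_by_subspaces {NG NL E : ℕ} (hNG : 0 < NG) (hNL : 0 < NL) (hE : 0 < E)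
    (C : Matrix (Fin (NG + NL)) (Fin E) ℝ) (B : Matrix (Fin E) (Fin E) ℝ)
    (hInc : IsIncidence C) (hConn : ConnectedIncidence C) (hB : PosDiag B) :
    ∃ (k : ℕ) (V : Fin k → Submodule ℝ (Fin NG → ℝ)),
      (∀ m, Module.finrank ℝ (V m) ≤ NG - 1) ∧
      { f : Fin NG → ℝ | ∀ i, 0 ≤ f i } \ OmegaF C B ⊆
        ⋃ m, (V m : Set (Fin NG → ℝ)) := by
  classical
  have hN : 0 < NG + NL := by omega
  let ι := Finset (Fin NG) × Finset (Fin E)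
  let W : ι → Submodule ℝ (Fin NG → ℝ) := fun p =>
    if ∃ d, DirSub C B p.1 p.2 d ∧ d ≠ 0 then orthSub C B p.1 p.2 else ⊥
  refine ⟨Fintype.card ι, fun m => W ((Fintype.equivFin ι).symm m), fun m => ?_, ?_⟩
  · beta_reduce
    generalize (Fintype.equivFin ι).symm m = p
    show Module.finrank ℝ (W p) ≤ NG - 1
    by_cases hp : ∃ d, DirSub C B p.1 p.2 d ∧ d ≠ 0
    · have hW : W p = orthSub C B p.1 p.2 := if_pos hp
      obtain ⟨d, hd, hd0⟩ := hp
      rw [hW]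
      exact orthSub_finrank C B hConn hB hN _ _ d hd hd0
    · have hW : W p = ⊥ := if_neg hp
      rw [hW, finrank_bot]
      exact Nat.zero_le _
  · rintro f ⟨hf0, hf⟩
    have key : ∃ SG SE, (∃ d, DirSub C B SG SE d ∧ d ≠ 0) ∧ f ∈ orthSub C B SG SE := by
      by_contra hcon
      apply hf
      refine ⟨hf0, fun ξ _ sl hsl => ⟨?_, ?_⟩⟩
      · obtain ⟨sg, θ, hopt⟩ := exists_opt C B hConn hB hN f ξ sl hsl.2
        refine ⟨(sg, θ), hopt, ?_⟩
        rintro ⟨sg', θ'⟩ hopt'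
        have hθ : θ' = θ := by
          by_contra hne
          exact hcon (nonunique_orth C B f ξ sl sg' sg θ' θ hopt' hopt hne)
        subst hθ
        have h1 : sg' = sg := (feas_append hopt'.1).trans (feas_append hopt.1).symm
        rw [h1]
      · intro sg θ τ μp μm lp lm hk
        by_contra hlt
        apply hcon
        have c1 := card_support_le lp lm
        have c2 := card_support_le μp μm
        refine ⟨_, _, exists_dir C B hN ({i | lp i ≠ 0 ∨ lm i ≠ 0} : Set (Fin NG)).toFinite.toFinset
          ({i | μp i ≠ 0 ∨ μm i ≠ 0} : Set (Fin E)).toFinite.toFinset (by omega), ?_⟩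
        exact kkt_orth C B hN hB f ξ sl sg θ τ μp μm lp lm hk _ _
          (fun i hi => by simpa using hi) (fun i hi => by simpa using hi)
    obtain ⟨SG, SE, hd, hm⟩ := key
    refine Set.mem_iUnion.2 ⟨Fintype.equivFin ι (SG, SE), ?_⟩
    have hW : W (SG, SE) = orthSub C B SG SE := if_pos hd
    beta_reduce
    rw [Equiv.symm_apply_apply, hW]
    exact hm

end
end

section
/- For any subsets S ⊆ {1,…,E} and T ⊆ {1,…,N_G}, the set Q(S,T) := {f ∈ ℝ^{N_G} : there exist τ ∈ ℝ^{N+1}, μ ∈ ℝ^{E} with μ_e = 0 for all e ∉ S, and λ ∈ ℝ^{N_G} with λ_i = 0 for all i ∉ T, such that 0 = Mᵀτ + C B μ and −f = −(τ₁,…,τ_{N_G}) + λ} is contained in a linear subspace of ℝ^{N_G} of dimension at most |S| + |T| + 1. -/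
open Matrix

noncomputable section

/-- Action of `M` on the first `N` rows. -/
theorem Mmat_mulVec_castSucc {NG NL E : ℕ} (C : Matrix (Fin (NG + NL)) (Fin E) ℝ)
    (B : Matrix (Fin E) (Fin E) ℝ) (x : Fin (NG + NL) → ℝ) (i : Fin (NG + NL)) :
    (Mmat C B *ᵥ x) i.castSucc = ((C * B * Cᵀ) *ᵥ x) i := by
  simp [Matrix.mulVec, dotProduct, Mmat]

/-- Action of `M` on the last row. -/
theorem Mmat_mulVec_last {NG NL E : ℕ} (h0 : 0 < NG + NL)
    (C : Matrix (Fin (NG + NL)) (Fin E) ℝ)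
    (B : Matrix (Fin E) (Fin E) ℝ) (x : Fin (NG + NL) → ℝ) :
    (Mmat C B *ᵥ x) (Fin.last _) = x ⟨0, h0⟩ := by
  have : ∀ j : Fin (NG + NL), ((j : ℕ) = 0) ↔ j = ⟨0, h0⟩ := fun j => by
    rw [Fin.ext_iff]
  simp [Matrix.mulVec, dotProduct, Mmat, this]

/-- The kernel of `Mᵀ` consists of vectors constant on the first `N` entries and `0` at the end. -/
theorem Mmat_transpose_ker {NG NL E : ℕ} (h0 : 0 < NG + NL)
    (C : Matrix (Fin (NG + NL)) (Fin E) ℝ) (B : Matrix (Fin E) (Fin E) ℝ)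
    (hConn : ConnectedIncidence C) (hB : PosDiag B)
    (τ : Fin (NG + NL + 1) → ℝ) (h : (Mmat C B)ᵀ *ᵥ τ = 0) :
    ∃ c : ℝ, τ = c • (Fin.snoc (fun _ => 1) 0 : Fin (NG + NL + 1) → ℝ) := by
  have key : ∀ x : Fin (NG + NL) → ℝ,
      (∑ i, ((C * B * Cᵀ) *ᵥ x) i * τ i.castSucc) + x ⟨0, h0⟩ * τ (Fin.last _) = 0 := by
    intro x
    have h1 : (Mmat C B *ᵥ x) ⬝ᵥ τ = 0 := by
      rw [dotProduct_comm, Matrix.dotProduct_mulVec, ← Matrix.mulVec_transpose, h,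
        zero_dotProduct]
    rw [dotProduct, Fin.sum_univ_castSucc] at h1
    simpa only [Mmat_mulVec_castSucc, Mmat_mulVec_last h0] using h1
  have hlast : τ (Fin.last _) = 0 := by
    have h1 := key (fun _ => 1)
    have h2 : Cᵀ *ᵥ (fun _ => (1 : ℝ)) = 0 := (hConn _).2 ⟨1, rfl⟩
    rw [← Matrix.mulVec_mulVec, h2] at h1
    simpa using h1
  have h3 := key (fun i => τ i.castSucc)
  rw [hlast, mul_zero, add_zero] at h3
  set x : Fin (NG + NL) → ℝ := fun i => τ i.castSucc with hx
  have h4 : ∑ e, B e e * ((Cᵀ *ᵥ x) e) ^ 2 = 0 := by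
    have h5 : ((C * B * Cᵀ) *ᵥ x) ⬝ᵥ x = 0 := h3
    have hd : B = Matrix.diagonal (fun e => B e e) := by
      ext e e'
      by_cases hee : e = e'
      · subst hee; simp
      · rw [Matrix.diagonal_apply_ne _ hee, hB.2 e e' hee]
    rw [Matrix.mul_assoc, ← Matrix.mulVec_mulVec, dotProduct_comm, Matrix.dotProduct_mulVec,
      ← Matrix.mulVec_transpose, ← Matrix.mulVec_mulVec, hd] at h5
    rw [← h5, dotProduct]
    refine Finset.sum_congr rfl fun e _ => ?_
    rw [Matrix.mulVec_diagonal]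
    ring
  have h6 : Cᵀ *ᵥ x = 0 := by
    funext e
    have h7 := (Finset.sum_eq_zero_iff_of_nonneg
      (fun e _ => mul_nonneg (hB.1 e).le (sq_nonneg _))).1 h4 e (Finset.mem_univ e)
    have h8 := (hB.1 e).ne'
    simpa [h8] using h7
  obtain ⟨c, hc⟩ := (hConn x).1 h6
  refine ⟨c, ?_⟩
  funext i
  refine Fin.lastCases ?_ (fun i => ?_) i
  · simp [hlast]
  · have := congrFun hc i
    simpa [hx] using this

/-- The stationarity relation as a linear map. -/
def statMap {NG NL E : ℕ} (C : Matrix (Fin (NG + NL)) (Fin E) ℝ)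
    (B : Matrix (Fin E) (Fin E) ℝ) (S : Finset (Fin E)) (T : Finset (Fin NG)) :
    ((Fin (NG + NL + 1) → ℝ) × (Fin E → ℝ) × (Fin NG → ℝ)) →ₗ[ℝ]
      ((Fin (NG + NL) → ℝ) × ({e // e ∉ S} → ℝ) × ({i // i ∉ T} → ℝ)) where
  toFun p := ((Mmat C B)ᵀ *ᵥ p.1 + (C * B) *ᵥ p.2.1, fun e => p.2.1 e, fun i => p.2.2 i)
  map_add' p q := by
    ext <;> simp [Matrix.mulVec_add]; ring
  map_smul' c p := by
    ext <;> simp [Matrix.mulVec_smul]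

/-- Restriction of the multipliers to `S` and `T`. -/
def resMap {NG E : ℕ} (n : ℕ) (S : Finset (Fin E)) (T : Finset (Fin NG)) :
    ((Fin n → ℝ) × (Fin E → ℝ) × (Fin NG → ℝ)) →ₗ[ℝ] ((S → ℝ) × (T → ℝ)) where
  toFun p := (fun e => p.2.1 e, fun i => p.2.2 i)
  map_add' p q := by ext <;> simp
  map_smul' c p := by ext <;> simp

/-- The cost vector determined by the multipliers. -/
def costMap (NG NL E : ℕ) :
    ((Fin (NG + NL + 1) → ℝ) × (Fin E → ℝ) × (Fin NG → ℝ)) →ₗ[ℝ] (Fin NG → ℝ) where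
  toFun p := fun i => p.1 (Fin.castLE (by omega) i) - p.2.2 i
  map_add' p q := by ext; simp; ring
  map_smul' c p := by ext; simp; ring

theorem Qset_in_low_dim_subspace {NG NL E : ℕ} (hNG : 0 < NG) (hNL : 0 < NL) (hE : 0 < E)
    (C : Matrix (Fin (NG + NL)) (Fin E) ℝ) (B : Matrix (Fin E) (Fin E) ℝ)
    (hInc : IsIncidence C) (hConn : ConnectedIncidence C) (hB : PosDiag B)
    (S : Finset (Fin E)) (T : Finset (Fin NG)) :
    ∃ V : Submodule ℝ (Fin NG → ℝ), Module.finrank ℝ V ≤ S.card + T.card + 1 ∧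
      { f : Fin NG → ℝ |
        ∃ (τ : Fin (NG + NL + 1) → ℝ) (μ : Fin E → ℝ) (lam : Fin NG → ℝ),
          (∀ e ∉ S, μ e = 0) ∧ (∀ i ∉ T, lam i = 0) ∧
          (Mmat C B)ᵀ *ᵥ τ + (C * B) *ᵥ μ = 0 ∧
          (∀ i : Fin NG, -f i = -τ (Fin.castLE (by omega) i) + lam i) } ⊆
        (V : Set (Fin NG → ℝ)) := by
  have h0 : 0 < NG + NL := by omega
  let K := LinearMap.ker (statMap C B S T)
  refine ⟨K.map (costMap NG NL E), ?_, ?_⟩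
  · refine (Submodule.finrank_map_le _ _).trans ?_
    let r := (resMap (NG + NL + 1) S T).domRestrict K
    have h1 := LinearMap.finrank_range_add_finrank_ker r
    have h2 : Module.finrank ℝ (LinearMap.range r) ≤ S.card + T.card := by
      refine (Submodule.finrank_le _).trans ?_
      simp
    have h3 : Module.finrank ℝ (LinearMap.ker r) ≤ 1 := by
      let w : (Fin (NG + NL + 1) → ℝ) × (Fin E → ℝ) × (Fin NG → ℝ) :=
        (Fin.snoc (fun _ => 1) 0, 0, 0)
      have h4 : (LinearMap.ker r).map K.subtype ≤ Submodule.span ℝ {w} := by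
        rintro _ ⟨⟨⟨τ, μ, l⟩, hk⟩, hr, rfl⟩
        have hk' : statMap C B S T (τ, μ, l) = 0 := hk
        have hr' : resMap (NG + NL + 1) S T (τ, μ, l) = 0 := hr
        simp only [statMap, resMap, LinearMap.coe_mk, AddHom.coe_mk, Prod.mk_eq_zero,
          funext_iff, Subtype.forall, Pi.zero_apply] at hk' hr'
        obtain ⟨ha, hb, hc⟩ := hk'
        have hμ : μ = 0 := by
          funext e
          by_cases he : e ∈ S
          · exact hr'.1 e he
          · exact hb e he
        have hl : l = 0 := by
          funext e
          by_cases he : e ∈ T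
          · exact hr'.2 e he
          · exact hc e he
        subst hμ hl
        obtain ⟨c, hc⟩ := Mmat_transpose_ker h0 C B hConn hB τ (by
          funext j; simpa using ha j)
        rw [Submodule.mem_span_singleton]
        exact ⟨c, by simp [w, hc]⟩
      rw [← Submodule.finrank_map_subtype_eq K (LinearMap.ker r)]
      exact (Submodule.finrank_mono h4).trans (by simpa using finrank_span_le_card (R := ℝ) ({w} : Set _))
    omega
  · rintro f ⟨τ, μ, lam, hμ, hl, hs, hf⟩
    refine ⟨(τ, μ, lam), ?_, ?_⟩
    · change statMap C B S T (τ, μ, lam) = 0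
      simp only [statMap, LinearMap.coe_mk, AddHom.coe_mk, Prod.mk_eq_zero]
      exact ⟨hs, funext fun e => hμ e e.2, funext fun i => hl i i.2⟩
    · funext i
      have := hf i
      simp only [costMap, LinearMap.coe_mk, AddHom.coe_mk]
      linarith

end
end
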